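/- arXiv:2003.11261 — 2 statements merged into one kernel-verified Lean document; each statement's English description precedes it below -/
import Mathlib

section
/- Let A be an abelian category of finite global dimension. Then every acyclic cochain complex in A is absolutely acyclic; equivalently, the canonical functor from the absolute derived category D^abs(A) to the derived category D(A) is an equivalence. -/
open CategoryTheory CategoryTheory.Limits CategoryTheory.Pretriangulated

variable {A : Type u} [Category.{v} A] [Abelian A]

/-- The totalization of a (short exact) sequence of complexes `K ⟶ L ⟶ M`, realized
(up to isomorphism in the homotopy category) as a shifted mapping cone of the canonical
map `Cone(f) ⟶ M`. -/
noncomputable def totSES {K L M : CochainComplex A ℤ} (f : K ⟶ L) (g : L ⟶ M)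
    (hfg : f ≫ g = 0) : CochainComplex A ℤ :=
  (CochainComplex.mappingCone
    (CochainComplex.mappingCone.desc f 0 g (by simp [hfg])))⟦(-1 : ℤ)⟧

/-- A class of objects of the homotopy category which contains the totalizations of all
degreewise short exact sequences of complexes and is thick: closed under isomorphisms,
zero objects, shifts, extensions (cones) and direct summands. -/
structure TotClosed (P : HomotopyCategory A (ComplexShape.up ℤ) → Prop) : Prop where
  tot : ∀ {K L M : CochainComplex A ℤ} (f : K ⟶ L) (g : L ⟶ M) (hfg : f ≫ g = 0),
    (ShortComplex.mk f g hfg).ShortExact →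
    P ((HomotopyCategory.quotient A (ComplexShape.up ℤ)).obj (totSES f g hfg))
  zero : ∀ (X : HomotopyCategory A (ComplexShape.up ℤ)), IsZero X → P X
  iso : ∀ {X Y : HomotopyCategory A (ComplexShape.up ℤ)}, (X ≅ Y) → P X → P Y
  shift : ∀ (X : HomotopyCategory A (ComplexShape.up ℤ)) (n : ℤ), P X → P (X⟦n⟧)
  ext₂ : ∀ (T : Triangle (HomotopyCategory A (ComplexShape.up ℤ))),
    T ∈ distinguishedTriangles → P T.obj₁ → P T.obj₃ → P T.obj₂
  smd : ∀ (X Y : HomotopyCategory A (ComplexShape.up ℤ)), P (X ⊞ Y) → P X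

/-- A complex is absolutely acyclic if its image in the homotopy category belongs to
the minimal thick subcategory containing the totalizations of short exact sequences. -/
def IsAbsolutelyAcyclic (X : HomotopyCategory A (ComplexShape.up ℤ)) : Prop :=
  ∀ P, TotClosed P → P X


/-!
Let `L` be the functor from complexes to the absolute derived category. For an acyclic complex `C`,
let `p` be its projection onto the complex of its opcycles, with zero differential. Up to sign and
shift, `L(p)` is the image of the projection for `C⟦1⟧` followed by the connecting morphism of the
sequences `0 ⟶ opcycles i ⟶ C.X (i + 1) ⟶ opcycles (i + 1) ⟶ 0`. Iterating, `L(p)` factors for every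
`n` through the image of a family of Ext-classes of degree `n`; this image makes sense because Ext
is an effaceable, hence universal, `δ`-functor. So `L(p) = 0` if `Extⁿ` vanishes.

A morphism from `L(C)` to a complex `V` with zero differential is a fraction `C ⟵ K ⟶ V` with `K`
acyclic. Since `K ⟶ V` factors through the opcycles of `K`, it is zero. Now `C` is an extension of
two complexes with zero differential, so `L(C) = 0`, and the kernel of a Verdier quotient by a thick
subcategory is that subcategory.
-/

universe w₁ w₂ v₁ u₁ v₂ u₂

section Thick

variable {T : Type u₂} [Category.{v₂} T] [HasShift T ℤ] [Preadditive T] [HasZeroObject T]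
  [∀ n : ℤ, (shiftFunctor T n).Additive] [Pretriangulated T]

lemma exists_iso_biprod_of_retract {X Y : T} (r : Retract X Y) : ∃ Z, Nonempty (Y ≅ X ⊞ Z) := by
  obtain ⟨Z, g, h, hT⟩ := distinguished_cocone_triangle r.i
  have h_zero : h = 0 := Triangle.mor₃_eq_zero_of_mono₁ _ hT (inferInstanceAs (Mono r.i))
  obtain ⟨e, -⟩ := exists_iso_binaryBiproduct_of_distTriang _ hT h_zero
  exact ⟨Z, ⟨e⟩⟩

lemma prop_of_isZero_localization_obj {D : Type u₁} [Category.{v₁} D]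
    (P : ObjectProperty T) [P.IsTriangulated] [P.IsStableUnderRetracts] [IsTriangulated T]
    (L : T ⥤ D) [L.IsLocalization P.trW] {X : T} (hX : IsZero (L.obj X)) : P X := by
  obtain ⟨Y, s, hs, hs'⟩ := (MorphismProperty.map_eq_iff_precomp L P.trW (𝟙 X) 0).1
    (hX.eq_of_src _ _)
  obtain ⟨Z, g, h, hT, hZ⟩ := hs
  obtain ⟨r, hr⟩ := Triangle.yoneda_exact₂ _ hT (𝟙 X) (hs'.trans comp_zero)
  exact P.prop_of_retract ⟨g, r, hr.symm⟩ hZ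

end Thick

section ShiftedHomComp

variable {T : Type u₂} [Category.{v₂} T] [HasShift T ℤ] {X Y Z W : T} {a b c : ℤ}

lemma shiftedHom_comp_shift_map_comp (x : ShiftedHom X Y a) (f : Y ⟶ Z) (g : ShiftedHom Z W b)
    (h : b + a = c) :
    ShiftedHom.comp (Y := Z) (x ≫ f⟦a⟧') g h = x.comp (Y := Y) (Z := W) (f ≫ g) h := by
  simp [ShiftedHom.comp]

lemma shiftedHom_comp_comp_shift_map (x : ShiftedHom X Y a) (f : ShiftedHom Y Z b) (g : Z ⟶ W)
    (h : b + a = c) :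
    x.comp (Y := Y) (Z := W) (f ≫ g⟦b⟧') h = x.comp f h ≫ g⟦c⟧' := by
  have := (shiftFunctorAdd' T b a c h).inv.naturality g
  simpa [ShiftedHom.comp] using congr(x ≫ f⟦a⟧' ≫ $this)

lemma exists_shiftedHom_comp_iso_hom_eq (e : Y ≅ Z⟦b⟧) (x : ShiftedHom X Z c) (h : b + a = c) :
    ∃ y : ShiftedHom X Y a, y.comp (Y := Y) (Z := Z) e.hom h = x :=
  ⟨x ≫ (shiftFunctorAdd' T b a c h).hom.app Z ≫ e.inv⟦a⟧', by
    simp [ShiftedHom.comp, ← Functor.map_comp_assoc]⟩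

end ShiftedHomComp

section Effaceability

open HomologicalComplex in
lemma mono_comp_pOpcycles_of_quasiIso {m : ℤ} {Y : A} {K : CochainComplex A ℤ}
    (s : (single A (ComplexShape.up ℤ) m).obj Y ⟶ K) [QuasiIso s] :
    Mono ((singleObjXSelf (ComplexShape.up ℤ) m Y).inv ≫ s.f m ≫ K.pOpcycles m) := by
  let S := (single A (ComplexShape.up ℤ) m).obj Y
  have : IsIso (S.pOpcycles m) := S.isIso_pOpcycles _ m rfl (by simp [S])
  have : IsIso (S.homologyι m) := S.isIso_homologyι m _ rfl (by simp [S])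
  have hs : s.f m ≫ K.pOpcycles m =
      S.pOpcycles m ≫ inv (S.homologyι m) ≫ homologyMap s m ≫ K.homologyι m := by simp [S]
  rw [hs]
  infer_instance

open HomologicalComplex DerivedCategory in
lemma exists_mono_comp_map_single_eq_zero [HasDerivedCategory.{w₂} A] {m : ℤ} {Y : A}
    {K : CochainComplex A ℤ} (hK : IsZero (K.X m))
    (φ : Q.obj K ⟶ Q.obj ((single A (ComplexShape.up ℤ) m).obj Y)) :
    ∃ (Z : A) (i : Y ⟶ Z), Mono i ∧ φ ≫ Q.map ((single A (ComplexShape.up ℤ) m).map i) = 0 := by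
  obtain ⟨Y', g, s, hs, rfl⟩ := left_fac φ
  rw [isIso_Q_map_iff_quasiIso] at hs
  refine ⟨Y'.opcycles m, _, mono_comp_pOpcycles_of_quasiIso s, ?_⟩
  let t : Y' ⟶ (single A (ComplexShape.up ℤ) m).obj (Y'.opcycles m) :=
    mkHomToSingle (Y'.pOpcycles m) (by simp)
  have hgt : g ≫ t = 0 := by
    ext
    exact hK.eq_of_src _ _
  have hst : (single A (ComplexShape.up ℤ) m).map
      ((singleObjXSelf (ComplexShape.up ℤ) m Y).inv ≫ s.f m ≫ Y'.pOpcycles m) = s ≫ t := by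
    ext
    simp [t, single_map_f_self]
  rw [hst, Q.map_comp, Category.assoc, IsIso.inv_hom_id_assoc, ← Q.map_comp, hgt, Q.map_zero]

open DerivedCategory in
theorem exists_mono_comp_mk₀_eq_zero [HasExt.{w₁} A] {X Y : A} {n : ℕ}
    (α : Abelian.Ext X Y (n + 1)) :
    ∃ (Z : A) (i : Y ⟶ Z), Mono i ∧ α.comp (Abelian.Ext.mk₀ i) (add_zero _) = 0 := by
  let := HasDerivedCategory.standard A
  let e := (singleFunctors A).shiftIso ((n + 1 : ℕ) : ℤ) (-((n + 1 : ℕ) : ℤ)) 0 (by simp)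
  obtain ⟨Z, i, hi, h⟩ := exists_mono_comp_map_single_eq_zero
    (HomologicalComplex.isZero_single_obj_X (ComplexShape.up ℤ) 0 X (-((n + 1 : ℕ) : ℤ))
      (by grind)) (α.hom ≫ e.hom.app Y)
  refine ⟨Z, i, hi, ?_⟩
  ext
  rw [← Abelian.Ext.hom_comp_singleFunctor_map_shift, ← cancel_mono (e.hom.app _), Category.assoc,
    Abelian.Ext.zero_hom, zero_comp]
  exact (congrArg (α.hom ≫ ·) (e.hom.naturality i)).trans ((Category.assoc _ _ _).symm.trans h)

end Effaceability

section DeltaFunctors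

variable {B : Type u₁} [Category.{v₁} B] [Abelian B]

/-- The short complex `Y ⟶ Q ⟶ coker i`, through which a monomorphism `i : Y ⟶ Q` is used to shift
degrees in `δ`-functors. -/
noncomputable abbrev cokernelSequence {Y Q : B} (i : Y ⟶ Q) : ShortComplex B :=
  ShortComplex.mk i (cokernel.π i) (cokernel.condition i)

lemma cokernelSequence_shortExact {Y Q : B} (i : Y ⟶ Q) [Mono i] :
    (cokernelSequence i).ShortExact where
  exact := ShortComplex.exact_cokernel i

variable (B) in
/-- A cohomological `δ`-functor from `B` to abelian groups, in degrees `n ≥ 0`. Of the long exact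
sequences only `δ ∘ G(g) = 0` is required; see `DeltaFunctor.IsExact`. -/
structure DeltaFunctor where
  obj : ℕ → B ⥤ AddCommGrpCat.{w₁}
  δ {S : ShortComplex B} (hS : S.ShortExact) (n : ℕ) :
    (obj n).obj S.X₃ →+ (obj (n + 1)).obj S.X₁
  map_δ {S S' : ShortComplex B} (hS : S.ShortExact) (hS' : S'.ShortExact) (f : S ⟶ S') (n : ℕ)
    (x : (obj n).obj S.X₃) :
    (obj (n + 1)).map f.τ₁ (δ hS n x) = δ hS' n ((obj n).map f.τ₃ x)
  δ_map_g {S : ShortComplex B} (hS : S.ShortExact) (n : ℕ) (x : (obj n).obj S.X₂) :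
    δ hS n ((obj n).map S.g x) = 0

namespace DeltaFunctor

/-- The half of the exactness of the long sequences that makes an effaceable `δ`-functor universal:
exactness at `Gⁿ⁺¹(S.X₁)` and at `Gⁿ(S.X₃)`, as far as it is not part of `DeltaFunctor`. -/
structure IsExact (G : DeltaFunctor.{w₁} B) : Prop where
  exists_δ_eq {S : ShortComplex B} (hS : S.ShortExact) {n : ℕ} (x : (G.obj (n + 1)).obj S.X₁)
    (hx : (G.obj (n + 1)).map S.f x = 0) : ∃ y, G.δ hS n y = x
  exists_map_g_eq {S : ShortComplex B} (hS : S.ShortExact) {n : ℕ} (x : (G.obj n).obj S.X₃)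
    (hx : G.δ hS n x = 0) : ∃ y, (G.obj n).map S.g y = x

/-- Effaceability in positive degrees, in the elementwise form: every class is annihilated by some
monomorphism, which may depend on the class. -/
def IsEffaceable (G : DeltaFunctor.{w₁} B) : Prop :=
  ∀ ⦃n : ℕ⦄ ⦃Y : B⦄ (x : (G.obj (n + 1)).obj Y),
    ∃ (Q : B) (i : Y ⟶ Q), Mono i ∧ (G.obj (n + 1)).map i x = 0

/-- A natural transformation between functors to abelian groups that live in different universes. -/
structure HetNatTrans (F : B ⥤ AddCommGrpCat.{w₁}) (F' : B ⥤ AddCommGrpCat.{w₂}) where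
  app (Y : B) : F.obj Y →+ F'.obj Y
  naturality {Y Y' : B} (f : Y ⟶ Y') (x : F.obj Y) : F'.map f (app Y x) = app Y' (F.map f x)

/-- A morphism of `δ`-functors with values in possibly different universes. -/
structure Hom (G : DeltaFunctor.{w₁} B) (H : DeltaFunctor.{w₂} B) where
  app (n : ℕ) : HetNatTrans (G.obj n) (H.obj n)
  app_δ {S : ShortComplex B} (hS : S.ShortExact) {n : ℕ} (x : (G.obj n).obj S.X₃) :
    (app (n + 1)).app _ (G.δ hS n x) = H.δ hS n ((app n).app _ x)

variable {G : DeltaFunctor.{w₁} B} {H : DeltaFunctor.{w₂} B} {n : ℕ}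

lemma map_δ_cokernelSequence (G : DeltaFunctor.{w₁} B) {Y Q Y' Q' : B} {i : Y ⟶ Q} [Mono i]
    {i' : Y' ⟶ Q'} [Mono i'] (f : Y ⟶ Y') (g : Q ⟶ Q') (comm : i ≫ g = f ≫ i')
    (x : (G.obj n).obj (cokernel i)) :
    (G.obj (n + 1)).map f (G.δ (cokernelSequence_shortExact i) n x) =
      G.δ (cokernelSequence_shortExact i') n ((G.obj n).map (cokernel.map i i' f g comm) x) :=
  G.map_δ (cokernelSequence_shortExact i) (cokernelSequence_shortExact i')
    (ShortComplex.homMk (S₁ := cokernelSequence i) (S₂ := cokernelSequence i') f g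
      (cokernel.map i i' f g comm) comm.symm (by simp)) n x

variable (φ : HetNatTrans (G.obj n) (H.obj n))

/-- The graph of the extension of `φ` from degree `n` to degree `n + 1` that is forced by
compatibility with the maps `δ` of the sequences `Y ⟶ Q ⟶ coker i`. -/
def connectingPairs (Y : B) : Set ((G.obj (n + 1)).obj Y × (H.obj (n + 1)).obj Y) :=
  {p | ∃ (Q : B) (i : Y ⟶ Q) (_ : Mono i) (x : (G.obj n).obj (cokernel i)),
    (G.δ (cokernelSequence_shortExact i) n x,
      H.δ (cokernelSequence_shortExact i) n (φ.app _ x)) = p}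

variable {φ}

lemma map_connectingPair {Y Q Y' Q' : B} {i : Y ⟶ Q} [Mono i]
    {i' : Y' ⟶ Q'} [Mono i'] (f : Y ⟶ Y') (g : Q ⟶ Q') (comm : i ≫ g = f ≫ i')
    (x : (G.obj n).obj (cokernel i)) :
    ((G.obj (n + 1)).map f (G.δ (cokernelSequence_shortExact i) n x),
      (H.obj (n + 1)).map f (H.δ (cokernelSequence_shortExact i) n (φ.app _ x))) =
    (G.δ (cokernelSequence_shortExact i') n ((G.obj n).map (cokernel.map i i' f g comm) x),
      H.δ (cokernelSequence_shortExact i') n (φ.app _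
        ((G.obj n).map (cokernel.map i i' f g comm) x))) := by
  rw [map_δ_cokernelSequence G f g comm, map_δ_cokernelSequence H f g comm, φ.naturality]

lemma map_mem_connectingPairs {Y Y' : B} (f : Y ⟶ Y')
    {p : (G.obj (n + 1)).obj Y × (H.obj (n + 1)).obj Y} (hp : p ∈ connectingPairs φ Y) :
    ((G.obj (n + 1)).map f p.1, (H.obj (n + 1)).map f p.2) ∈ connectingPairs φ Y' := by
  obtain ⟨Q, i, _, x, rfl⟩ := hp
  exact ⟨_, pushout.inr i f, inferInstance, _,
    (map_connectingPair f (pushout.inl i f) pushout.condition x).symm⟩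

lemma sub_mem_connectingPairs {Y : B} {p p' : (G.obj (n + 1)).obj Y × (H.obj (n + 1)).obj Y}
    (hp : p ∈ connectingPairs φ Y) (hp' : p' ∈ connectingPairs φ Y) :
    p - p' ∈ connectingPairs φ Y := by
  obtain ⟨Q, i, _, x, rfl⟩ := hp
  obtain ⟨Q', i', _, x', rfl⟩ := hp'
  have hx := map_connectingPair (φ := φ) (i := i) (i' := i ≫ pushout.inl i i') (𝟙 Y)
    (pushout.inl i i') (by simp) x
  have hx' := map_connectingPair (φ := φ) (i := i') (i' := i ≫ pushout.inl i i') (𝟙 Y)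
    (pushout.inr i i') (by simp [pushout.condition]) x'
  simp only [CategoryTheory.Functor.map_id, AddCommGrpCat.hom_id, AddMonoidHom.id_apply] at hx hx'
  rw [hx, hx', Prod.mk_sub_mk, ← map_sub, ← map_sub, ← map_sub]
  exact ⟨_, i ≫ pushout.inl i i', inferInstance, _, rfl⟩

lemma snd_eq_zero_of_mem_connectingPairs (hG : G.IsExact) {Y : B} {h : (H.obj (n + 1)).obj Y}
    (hp : (0, h) ∈ connectingPairs φ Y) : h = 0 := by
  obtain ⟨Q, i, _, x, hx⟩ := hp
  obtain ⟨hx₀, rfl⟩ := Prod.mk.inj hx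
  obtain ⟨y, rfl⟩ := hG.exists_map_g_eq (cokernelSequence_shortExact i) x hx₀
  rw [← φ.naturality, H.δ_map_g (cokernelSequence_shortExact i)]

lemma exists_mem_connectingPairs (φ : HetNatTrans (G.obj n) (H.obj n)) (hG : G.IsExact)
    (hG' : G.IsEffaceable) {Y : B} (a : (G.obj (n + 1)).obj Y) :
    ∃ h, (a, h) ∈ connectingPairs φ Y := by
  obtain ⟨Q, i, _, hi⟩ := hG' a
  obtain ⟨x, rfl⟩ := hG.exists_δ_eq (cokernelSequence_shortExact i) a hi
  exact ⟨_, Q, i, inferInstance, x, rfl⟩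

lemma exists_graph_eq_connectingPairs (φ : HetNatTrans (G.obj n) (H.obj n)) (hG : G.IsExact)
    (hG' : G.IsEffaceable) (Y : B) :
    ∃ ψ : (G.obj (n + 1)).obj Y →+ (H.obj (n + 1)).obj Y,
      ∀ a h, (a, h) ∈ connectingPairs φ Y ↔ ψ a = h := by
  let Γ : AddSubgroup ((G.obj (n + 1)).obj Y × (H.obj (n + 1)).obj Y) :=
    .ofSub (connectingPairs φ Y) ⟨_, (exists_mem_connectingPairs φ hG hG' 0).choose_spec⟩
      fun p hp p' hp' ↦ sub_eq_add_neg p p' ▸ sub_mem_connectingPairs hp hp'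
  have hΓ : Function.Bijective (Prod.fst ∘ Γ.subtype) := by
    refine ⟨?_, fun a ↦ ?_⟩
    · refine (injective_iff_map_eq_zero ((AddMonoidHom.fst _ _).comp Γ.subtype)).2 ?_
      rintro ⟨⟨a, h⟩, hp⟩ (rfl : a = 0)
      exact Subtype.ext (Prod.ext rfl (snd_eq_zero_of_mem_connectingPairs hG hp))
    · obtain ⟨h, hp⟩ := exists_mem_connectingPairs φ hG hG' a
      exact ⟨⟨(a, h), hp⟩, rfl⟩
  obtain ⟨ψ, hψ⟩ := AddSubgroup.exists_eq_graph hΓ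
  exact ⟨ψ, fun a h ↦ SetLike.ext_iff.1 hψ (a, h)⟩

lemma exists_app_succ (φ : HetNatTrans (G.obj n) (H.obj n)) (hG : G.IsExact)
    (hG' : G.IsEffaceable) :
    ∃ ψ : HetNatTrans (G.obj (n + 1)) (H.obj (n + 1)),
      ∀ (S : ShortComplex B) (hS : S.ShortExact) x,
        ψ.app _ (G.δ hS n x) = H.δ hS n (φ.app _ x) := by
  choose ψ hψ using exists_graph_eq_connectingPairs φ hG hG'
  refine ⟨⟨ψ, fun f a ↦ ?_⟩, fun S hS x ↦ ?_⟩
  · exact ((hψ _ _ _).1 (map_mem_connectingPairs f ((hψ _ _ _).2 rfl))).symm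
  · have := hS.mono_f
    have := hS.epi_g
    let f : S ⟶ cokernelSequence S.f :=
      ShortComplex.homMk (S₁ := S) (S₂ := cokernelSequence S.f) (𝟙 _) (𝟙 _)
        (hS.exact.desc (cokernel.π S.f) (cokernel.condition S.f)) (by simp) (by simp)
    refine (hψ _ _ _).1 ⟨S.X₂, S.f, inferInstance, (G.obj n).map f.τ₃ x, Prod.ext ?_ ?_⟩
    · exact (G.map_δ hS (cokernelSequence_shortExact S.f) f n x).symm.trans (by simp [f])
    · dsimp
      rw [← φ.naturality]
      exact (H.map_δ hS (cokernelSequence_shortExact S.f) f n _).symm.trans (by simp [f])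

theorem exists_hom_app_zero_eq (hG : G.IsExact) (hG' : G.IsEffaceable)
    (φ₀ : HetNatTrans (G.obj 0) (H.obj 0)) :
    ∃ φ : Hom G H, φ.app 0 = φ₀ := by
  choose ψ hψ using fun n (φ : HetNatTrans (G.obj n) (H.obj n)) ↦ exists_app_succ φ hG hG'
  exact ⟨⟨fun n ↦ n.rec φ₀ ψ, fun hS _ x ↦ hψ _ _ _ hS x⟩, rfl⟩

end DeltaFunctor
end DeltaFunctors

section Pi

variable {ι : Type w₂} (G : ι → DeltaFunctor.{w₁} A)

lemma shortExact_map_evaluation {S : ShortComplex (Discrete ι ⥤ A)} (hS : S.ShortExact) (i : ι) :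
    (S.map ((evaluation _ A).obj ⟨i⟩)).ShortExact :=
  hS.map_of_exact _

namespace DeltaFunctor

/-- The `δ`-functor on families of objects which is `G i` on the `i`-th component. -/
noncomputable def pi : DeltaFunctor.{max w₂ w₁} (Discrete ι ⥤ A) where
  obj n :=
    { obj Y := .of (∀ i, ((G i).obj n).obj (Y.obj ⟨i⟩))
      map f := AddCommGrpCat.ofHom
        (AddMonoidHom.mk' (fun x i ↦ ((G i).obj n).map (f.app ⟨i⟩) (x i))
        fun _ _ ↦ funext fun i ↦ map_add (((G i).obj n).map (f.app ⟨i⟩)).hom _ _) }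
  δ hS n := AddMonoidHom.mk' (fun x i ↦ (G i).δ (shortExact_map_evaluation hS i) n (x i))
    fun _ _ ↦ funext fun i ↦ map_add ((G i).δ (shortExact_map_evaluation hS i) n) _ _
  map_δ hS hS' f n x := funext fun i ↦
    (G i).map_δ (shortExact_map_evaluation hS i) (shortExact_map_evaluation hS' i)
      (((evaluation (Discrete ι) A).obj ⟨i⟩).mapShortComplex.map f) n (x i)
  δ_map_g hS n x := funext fun i ↦ (G i).δ_map_g (shortExact_map_evaluation hS i) n (x i)

variable {G}

lemma IsExact.pi (hG : ∀ i, (G i).IsExact) : (DeltaFunctor.pi G).IsExact where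
  exists_δ_eq hS _ x hx := by
    choose y hy using fun i ↦
      (hG i).exists_δ_eq (shortExact_map_evaluation hS i) (x i) (congrFun hx i)
    exact ⟨y, funext hy⟩
  exists_map_g_eq hS _ x hx := by
    choose y hy using fun i ↦
      (hG i).exists_map_g_eq (shortExact_map_evaluation hS i) (x i) (congrFun hx i)
    exact ⟨y, funext hy⟩

lemma IsEffaceable.pi (hG : ∀ i, (G i).IsEffaceable) : (DeltaFunctor.pi G).IsEffaceable := by
  intro n Y x
  choose Q f hf hx using fun i ↦ hG i (x i)
  refine ⟨Discrete.functor Q, Discrete.natTrans fun i ↦ f i.as, ?_, funext hx⟩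
  rw [NatTrans.mono_iff_mono_app]
  exact fun i ↦ hf i.as

end DeltaFunctor
end Pi

section Ext

open Abelian

lemma ext_comp_extClass_naturality [HasExt.{w₁} A] {X : A} {S S' : ShortComplex A}
    (hS : S.ShortExact) (hS' : S'.ShortExact) (f : S ⟶ S') {n : ℕ} (x : Ext X S.X₃ n) :
    (x.comp hS.extClass rfl).comp (Ext.mk₀ f.τ₁) (add_zero (n + 1)) =
      (x.comp (Ext.mk₀ f.τ₃) (add_zero n)).comp hS'.extClass rfl := by
  rw [Ext.comp_assoc_of_third_deg_zero, hS.extClass_naturality hS' f,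
    Ext.comp_assoc_of_second_deg_zero]

lemma ext_comp_mk₀_comp_extClass [HasExt.{w₁} A] {X : A} {S : ShortComplex A}
    (hS : S.ShortExact) {n : ℕ} (x : Ext X S.X₂ n) :
    (x.comp (Ext.mk₀ S.g) (add_zero n)).comp hS.extClass rfl = 0 := by
  rw [Ext.comp_assoc_of_second_deg_zero, hS.comp_extClass, Ext.comp_zero]

/-- The `δ`-functor `Ext X -`. -/
noncomputable def extDeltaFunctor [HasExt.{w₁} A] (X : A) : DeltaFunctor.{w₁} A where
  obj n := extFunctorObj X n
  δ hS _ := hS.extClass.postcomp X rfl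
  map_δ hS hS' f _ x := ext_comp_extClass_naturality hS hS' f x
  δ_map_g hS _ x := ext_comp_mk₀_comp_extClass hS x

lemma extDeltaFunctor_isExact [HasExt.{w₁} A] (X : A) : (extDeltaFunctor X).IsExact where
  exists_δ_eq hS _ x hx := Ext.covariant_sequence_exact₁ X hS x hx rfl
  exists_map_g_eq hS _ x hx := Ext.covariant_sequence_exact₃ X hS x rfl hx

lemma extDeltaFunctor_isEffaceable [HasExt.{w₁} A] (X : A) : (extDeltaFunctor X).IsEffaceable :=
  fun _ _ x ↦ exists_mono_comp_mk₀_eq_zero x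

end Ext

section TriangleValued

open CochainComplex hiding shiftFunctor

/-- The degree one morphism of the standard triangle `K ⟶ M ⟶ mappingCone f ⟶ K⟦1⟧`. -/
noncomputable def coneProjection {K M : CochainComplex A ℤ} (f : K ⟶ M) :
    mappingCone f ⟶ K⟦(1 : ℤ)⟧ :=
  (mappingCone.triangle f).mor₃

lemma coneProjection_naturality {S S' : ShortComplex (CochainComplex A ℤ)} (f : S ⟶ S') :
    coneProjection S.f ≫ f.τ₁⟦(1 : ℤ)⟧' =
      mappingCone.map S.f S'.f f.τ₁ f.τ₂ f.comm₁₂.symm ≫ coneProjection S'.f :=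
  (mappingCone.triangleMap S.f S'.f f.τ₁ f.τ₂ f.comm₁₂.symm).comm₃

variable {T : Type u₂} [Category.{v₂} T] [HasShift T ℤ]

/-- The image in `T` of `coneProjection f`. -/
noncomputable def mapConeProjection (L : CochainComplex A ℤ ⥤ T) [L.CommShift ℤ]
    {K M : CochainComplex A ℤ} (f : K ⟶ M) : L.obj (mappingCone f) ⟶ (L.obj K)⟦(1 : ℤ)⟧ :=
  L.map (coneProjection f) ≫ (L.commShiftIso (1 : ℤ)).hom.app K

lemma mapConeProjection_naturality (L : CochainComplex A ℤ ⥤ T) [L.CommShift ℤ]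
    {S S' : ShortComplex (CochainComplex A ℤ)} (f : S ⟶ S') :
    mapConeProjection L S.f ≫ (L.map f.τ₁)⟦(1 : ℤ)⟧' =
      L.map (mappingCone.map S.f S'.f f.τ₁ f.τ₂ f.comm₁₂.symm) ≫ mapConeProjection L S'.f := by
  rw [mapConeProjection, mapConeProjection, Category.assoc, ← L.commShiftIso_hom_naturality,
    ← L.map_comp_assoc, coneProjection_naturality, L.map_comp_assoc]

variable [Preadditive T] [HasZeroObject T] [∀ n : ℤ, (shiftFunctor T n).Additive]
  [Pretriangulated T]

/-- `L` sends the standard triangles of mapping cones and the short exact sequences of complexes to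
distinguished triangles. The latter is expressed through the comparison map from the cone of the
first morphism to the third term, so that connecting morphisms are canonical. -/
class IsTriangleValued (L : CochainComplex A ℤ ⥤ T) [L.CommShift ℤ] : Prop where
  cone_distinguished (L) {K M : CochainComplex A ℤ} (f : K ⟶ M) :
    Triangle.mk (L.map f) (L.map (mappingCone.inr f)) (mapConeProjection L f) ∈ distTriang T
  isIso_map_descShortComplex (L) {S : ShortComplex (CochainComplex A ℤ)} (hS : S.ShortExact) :
    IsIso (L.map (mappingCone.descShortComplex S))

namespace IsTriangleValued

variable (L : CochainComplex A ℤ ⥤ T) [L.CommShift ℤ] [IsTriangleValued L]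
  {S S' : ShortComplex (CochainComplex A ℤ)}

/-- The third morphism of the distinguished triangle attached to a short exact sequence. -/
noncomputable def connecting (hS : S.ShortExact) : L.obj S.X₃ ⟶ (L.obj S.X₁)⟦(1 : ℤ)⟧ :=
  have := isIso_map_descShortComplex L hS
  inv (L.map (mappingCone.descShortComplex S)) ≫ mapConeProjection L S.f

lemma map_descShortComplex_connecting (hS : S.ShortExact) :
    L.map (mappingCone.descShortComplex S) ≫ connecting L hS = mapConeProjection L S.f := by
  have := isIso_map_descShortComplex L hS
  simp [connecting]

lemma connecting_distinguished (hS : S.ShortExact) :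
    Triangle.mk (L.map S.f) (L.map S.g) (connecting L hS) ∈ distTriang T := by
  have := isIso_map_descShortComplex L hS
  let e : L.obj (mappingCone S.f) ≅ L.obj S.X₃ := asIso (L.map (mappingCone.descShortComplex S))
  have he : L.map (mappingCone.inr S.f) ≫ e.hom = L.map S.g := by simp [e, ← L.map_comp]
  have he' : e.hom ≫ connecting L hS = mapConeProjection L S.f :=
    map_descShortComplex_connecting L hS
  exact isomorphic_distinguished _ (cone_distinguished L S.f) _
    (Triangle.isoMk
      (Triangle.mk (L.map S.f) (L.map (mappingCone.inr S.f)) (mapConeProjection L S.f))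
      (Triangle.mk (L.map S.f) (L.map S.g) (connecting L hS))
      (Iso.refl (L.obj S.X₁)) (Iso.refl (L.obj S.X₂)) e
      ((Category.comp_id _).trans (Category.id_comp _).symm) (he.trans (Category.id_comp _).symm)
      (((congrArg _ ((shiftFunctor T (1 : ℤ)).map_id _)).trans (Category.comp_id _)).trans
        he'.symm)).symm

lemma connecting_naturality (hS : S.ShortExact) (hS' : S'.ShortExact) (f : S ⟶ S') :
    connecting L hS ≫ (L.map f.τ₁)⟦(1 : ℤ)⟧' = L.map f.τ₃ ≫ connecting L hS' := by
  have := isIso_map_descShortComplex L hS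
  rw [← cancel_epi (L.map (mappingCone.descShortComplex S)), ← Category.assoc,
    map_descShortComplex_connecting, mapConeProjection_naturality, ← L.map_comp_assoc,
    ← mappingCone.map_descShortComplex, L.map_comp, Category.assoc,
    map_descShortComplex_connecting]

end IsTriangleValued
end TriangleValued

section HomDeltaFunctor

variable {T : Type u₂} [Category.{v₂} T] [HasShift T ℤ] [Preadditive T] [HasZeroObject T]
  [∀ n : ℤ, (shiftFunctor T n).Additive] [Pretriangulated T]
  {B : Type u₁} [Category.{v₁} B] [Abelian B]

open IsTriangleValued in
/-- The `δ`-functor `Y ↦ Hom(X, L(E Y)⟦n⟧)`, for an exact embedding `E` into complexes. -/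
noncomputable def homDeltaFunctor (E : B ⥤ CochainComplex A ℤ) [E.PreservesZeroMorphisms]
    [PreservesFiniteLimits E] [PreservesFiniteColimits E]
    (L : CochainComplex A ℤ ⥤ T) [L.CommShift ℤ] [IsTriangleValued L] (X : T) :
    DeltaFunctor.{v₂} B where
  obj n := E ⋙ L ⋙ shiftFunctor T (n : ℤ) ⋙ preadditiveCoyoneda.obj (.op X)
  δ {S} hS n := AddMonoidHom.mk' (fun x ↦ ShiftedHom.comp (Y := L.obj (E.obj S.X₃)) x
      (connecting L (hS.map_of_exact E)) (show (1 : ℤ) + n = (n + 1 : ℕ) by push_cast; ring))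
    fun x y ↦ ShiftedHom.add_comp x y _ _
  map_δ hS hS' f n x :=
    (shiftedHom_comp_comp_shift_map x _ _ _).symm.trans
      ((congrArg (ShiftedHom.comp x · _) (connecting_naturality L (hS.map_of_exact E)
        (hS'.map_of_exact E) (E.mapShortComplex.map f))).trans
          (shiftedHom_comp_shift_map_comp x _ _ _).symm)
  δ_map_g hS n x :=
    (shiftedHom_comp_shift_map_comp (Y := L.obj (E.obj _)) x _ _ _).trans
      ((congrArg (ShiftedHom.comp (Y := L.obj (E.obj _)) x · _) (comp_distTriang_mor_zero₂₃ _
        (connecting_distinguished L (hS.map_of_exact E)))).trans (ShiftedHom.comp_zero _ _ _))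

end HomDeltaFunctor

section ZeroDifferential

lemma shortExact_of_evaluation {J : Type u₁} [Category.{v₁} J] {S : ShortComplex (J ⥤ A)}
    (hS : ∀ j, (S.map ((evaluation J A).obj j)).ShortExact) : S.ShortExact where
  mono_f := (NatTrans.mono_iff_mono_app _).2 fun j ↦ (hS j).mono_f
  epi_g := (NatTrans.epi_iff_epi_app _).2 fun j ↦ (hS j).epi_g
  exact := by
    simp only [ShortComplex.exact_iff_isZero_homology, Functor.isZero_iff]
    exact fun j ↦ ((ShortComplex.exact_iff_isZero_homology _).1 (hS j).exact).of_iso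
      (S.mapHomologyIso ((evaluation J A).obj j)).symm

variable (A) in
/-- Families of objects indexed by `ℤ`, as complexes with zero differential. -/
@[simps]
def zeroDifferential : (Discrete ℤ ⥤ A) ⥤ CochainComplex A ℤ where
  obj V :=
    { X i := V.obj ⟨i⟩
      d _ _ := 0 }
  map f := { f i := f.app ⟨i⟩ }

instance : (zeroDifferential A).Additive where

instance : PreservesFiniteLimits (zeroDifferential A) where
  preservesFiniteLimits J _ _ := HomologicalComplex.preservesLimitsOfShape_of_eval _ fun i ↦
    inferInstanceAs (PreservesLimitsOfShape J ((evaluation (Discrete ℤ) A).obj ⟨i⟩))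

instance : PreservesFiniteColimits (zeroDifferential A) where
  preservesFiniteColimits J _ _ := HomologicalComplex.preservesColimitsOfShape_of_eval _ fun i ↦
    inferInstanceAs (PreservesColimitsOfShape J ((evaluation (Discrete ℤ) A).obj ⟨i⟩))

/-- A morphism to a complex with zero differential, from its components. -/
def toZeroDifferential {C : CochainComplex A ℤ} {V : Discrete ℤ ⥤ A} (t : ∀ i, C.X i ⟶ V.obj ⟨i⟩)
    (ht : ∀ i, C.d i (i + 1) ≫ t (i + 1) = 0) : C ⟶ (zeroDifferential A).obj V where
  f := t
  comm' i j hij := by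
    obtain rfl : i + 1 = j := hij
    exact comp_zero.trans (ht i).symm

end ZeroDifferential

section Opcycles

lemma exactAt_shift {C : CochainComplex A ℤ} (hC : ∀ i, C.ExactAt i) (n i : ℤ) :
    (C⟦n⟧).ExactAt i :=
  (ShortComplex.exact_iff_of_iso
    ((CochainComplex.shiftShortComplexFunctorIso A n i (n + i) rfl).app C)).2 (hC (n + i))

variable (C : CochainComplex A ℤ)

/-- The family of the opcycles `C.X i / im (C.d (i - 1) i)`. -/
noncomputable def gradedOpcycles : Discrete ℤ ⥤ A := Discrete.functor fun i ↦ C.opcycles i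

/-- The projection of a complex onto its opcycles; it is universal among morphisms to complexes with
zero differential. -/
noncomputable def toGradedOpcycles : C ⟶ (zeroDifferential A).obj (gradedOpcycles C) :=
  toZeroDifferential (V := gradedOpcycles C) (fun i ↦ C.pOpcycles i) fun i ↦ C.d_pOpcycles i (i + 1)

variable {C}

lemma exists_toGradedOpcycles_comp_eq {V : Discrete ℤ ⥤ A} (f : C ⟶ (zeroDifferential A).obj V) :
    ∃ t, f = toGradedOpcycles C ≫ (zeroDifferential A).map t := by
  have hf (i : ℤ) : C.d (i - 1) i ≫ f.f i = 0 := (f.comm (i - 1) i).symm.trans comp_zero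
  refine ⟨Discrete.natTrans fun i ↦ C.descOpcycles (f.f i.as) (i.as - 1) (by simp) (hf i.as), ?_⟩
  apply HomologicalComplex.hom_ext
  intro i
  exact (C.p_descOpcycles (f.f i) (i - 1) (by simp) (hf i)).symm

lemma exists_shortExact_toGradedOpcycles (C : CochainComplex A ℤ) :
    ∃ (V : Discrete ℤ ⥤ A) (j : (zeroDifferential A).obj V ⟶ C) (hj : j ≫ toGradedOpcycles C = 0),
      (ShortComplex.mk j (toGradedOpcycles C) hj).ShortExact := by
  let V : Discrete ℤ ⥤ A := Discrete.functor fun i ↦ kernel (C.pOpcycles i)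
  let j : (zeroDifferential A).obj V ⟶ C :=
    { f i := kernel.ι (C.pOpcycles i)
      comm' i k hik := by
        obtain rfl : i + 1 = k := hik
        have h : kernel.ι (C.pOpcycles i) ≫ C.d i (i + 1) = 0 := by
          rw [← C.p_fromOpcycles, kernel.condition_assoc, zero_comp]
        exact h.trans zero_comp.symm }
  refine ⟨V, j, HomologicalComplex.hom_ext _ _ fun i ↦ kernel.condition (C.pOpcycles i),
    HomologicalComplex.shortExact_of_degreewise_shortExact _ fun i ↦ ?_⟩
  exact { exact := ShortComplex.exact_kernel (C.pOpcycles i)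
          mono_f := inferInstanceAs (Mono (kernel.ι (C.pOpcycles i)))
          epi_g := inferInstanceAs (Epi (C.pOpcycles i)) }

/-- The projection onto the opcycles of `C⟦1⟧` in degree `i`, seen on `C.X (i + 1)`, which is
definitionally `(C⟦1⟧).X i`. -/
noncomputable def shiftPOpcycles (C : CochainComplex A ℤ) (i : ℤ) :
    C.X (i + 1) ⟶ (C⟦(1 : ℤ)⟧).opcycles i :=
  (C⟦(1 : ℤ)⟧).pOpcycles i

instance (C : CochainComplex A ℤ) (i : ℤ) : Epi (shiftPOpcycles C i) :=
  inferInstanceAs (Epi ((C⟦(1 : ℤ)⟧).pOpcycles i))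

lemma d_comp_shiftPOpcycles (C : CochainComplex A ℤ) (i : ℤ) :
    C.d i (i + 1) ≫ shiftPOpcycles C i = 0 := by
  obtain ⟨j, rfl⟩ : ∃ j, i = j + 1 := ⟨i - 1, by simp⟩
  have h : (-C.d (j + 1) (j + 1 + 1)) ≫ shiftPOpcycles C (j + 1) = 0 := by
    have h := (C⟦(1 : ℤ)⟧).d_pOpcycles j (j + 1)
    rw [CochainComplex.shiftFunctor_obj_d', Int.negOnePow_one, Units.neg_smul, one_smul] at h
    exact h
  rwa [Preadditive.neg_comp, neg_eq_zero] at h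

lemma fromOpcycles_comp_shiftPOpcycles (C : CochainComplex A ℤ) (i : ℤ) :
    C.fromOpcycles i (i + 1) ≫ shiftPOpcycles C i = 0 := by
  rw [← cancel_epi (C.pOpcycles i), C.p_fromOpcycles_assoc, d_comp_shiftPOpcycles, comp_zero]

lemma shortExact_fromOpcycles_shiftPOpcycles {i : ℤ} (hC : C.ExactAt i) :
    (ShortComplex.mk (C.fromOpcycles i (i + 1)) (shiftPOpcycles C i)
      (fromOpcycles_comp_shiftPOpcycles C i)).ShortExact where
  mono_f := Preadditive.mono_of_isZero_kernel' _ (C.homologyIsKernel i (i + 1) (by simp))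
    hC.isZero_homology
  epi_g := inferInstanceAs (Epi (shiftPOpcycles C i))
  exact := by
    obtain ⟨j, rfl⟩ : ∃ j, i = j + 1 := ⟨i - 1, by simp⟩
    refine ShortComplex.exact_of_g_is_cokernel _ (CokernelCofork.IsColimit.ofπ' _ _
      fun k (hk : C.fromOpcycles (j + 1) (j + 1 + 1) ≫ k = 0) ↦ ?_)
    have hk' : C.d (j + 1) (j + 1 + 1) ≫ k = 0 := by
      rw [← C.p_fromOpcycles, Category.assoc, hk, comp_zero]
    have hk'' : (C⟦(1 : ℤ)⟧).d j (j + 1) ≫ k = 0 := by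
      rw [CochainComplex.shiftFunctor_obj_d', Int.negOnePow_one, Units.neg_smul, one_smul]
      exact (Preadditive.neg_comp _ _).trans (neg_eq_zero.2 hk')
    exact ⟨(C⟦(1 : ℤ)⟧).descOpcycles k j (by simp) hk'',
      (C⟦(1 : ℤ)⟧).p_descOpcycles _ _ _ _⟩

/-- The sequences `0 ⟶ opcycles i ⟶ C.X (i + 1) ⟶ opcycles (i + 1) ⟶ 0` of an acyclic complex. Their
third term is taken from `C⟦1⟧`, so that the construction can be iterated along shifts of `C`. -/
noncomputable def opcyclesSequence (C : CochainComplex A ℤ) : ShortComplex (Discrete ℤ ⥤ A) :=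
  .mk (X₁ := gradedOpcycles C) (X₂ := Discrete.functor fun i ↦ C.X (i + 1))
    (X₃ := gradedOpcycles (C⟦(1 : ℤ)⟧)) (Discrete.natTrans fun i ↦ C.fromOpcycles i.as (i.as + 1))
    (Discrete.natTrans fun i ↦ shiftPOpcycles C i.as)
    (by ext i; exact fromOpcycles_comp_shiftPOpcycles C i.as)

lemma opcyclesSequence_shortExact (hC : ∀ i, C.ExactAt i) : (opcyclesSequence C).ShortExact :=
  shortExact_of_evaluation fun i ↦ shortExact_fromOpcycles_shiftPOpcycles (hC i.as)

open CochainComplex.HomComplex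
open CochainComplex hiding shiftFunctor

/-- The morphism `(a, b) ↦ a + d b` from the cone of `𝟙 C` in degree `i`; the middle part of the
comparison of the sequence `C ⟶ Cone(𝟙 C) ⟶ C⟦1⟧` with `opcyclesSequence C`. -/
noncomputable def coneIdToNext (C : CochainComplex A ℤ) (i : ℤ) :
    (mappingCone (𝟙 C)).X i ⟶ C.X (i + 1) :=
  (mappingCone.fst (𝟙 C)).1.v i (i + 1) rfl +
      (mappingCone.snd (𝟙 C)).v i i (add_zero i) ≫ C.d i (i + 1)

lemma d_comp_coneIdToNext (C : CochainComplex A ℤ) (i : ℤ) :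
    (mappingCone (𝟙 C)).d i (i + 1) ≫ coneIdToNext C (i + 1) = 0 := by
  simp [coneIdToNext, mappingCone.d_fst_v _ i (i + 1) (i + 1 + 1) rfl rfl,
        mappingCone.d_snd_v_assoc _ i (i + 1) rfl]

lemma inr_comp_coneIdToNext (C : CochainComplex A ℤ) (i : ℤ) :
    (mappingCone.inr (𝟙 C)).f i ≫ coneIdToNext C i = C.d i (i + 1) := by
  simp [coneIdToNext]

lemma coneProjection_f {K M : CochainComplex A ℤ} (f : K ⟶ M) (i : ℤ) :
    (coneProjection f).f i = -(mappingCone.fst f).1.v i (i + 1) rfl := by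
  refine mappingCone.ext_from f (i + 1) i rfl ?_ ?_
  · have h : (mappingCone.inl f).v (i + 1) i (by lia) ≫ (-(mappingCone.fst f).1.v i (i + 1) rfl) =
        -𝟙 (K.X (i + 1)) := by simp
    exact (mappingCone.inl_v_triangle_mor₃_f f (i + 1) i (by lia)).trans h.symm
  · have h : (mappingCone.inr f).f i ≫ (-(mappingCone.fst f).1.v i (i + 1) rfl) = 0 := by simp
    exact (mappingCone.inr_f_triangle_mor₃_f f i).trans h.symm

lemma coneIdToNext_comp_shiftPOpcycles (C : CochainComplex A ℤ) (i : ℤ) :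
    coneIdToNext C i ≫ shiftPOpcycles C i = -(coneProjection (𝟙 C)).f i ≫ shiftPOpcycles C i := by
  simp [coneIdToNext, coneProjection_f, d_comp_shiftPOpcycles]

/-- The morphism with components `coneIdToNext`. -/
noncomputable def coneIdToGraded (C : CochainComplex A ℤ) :
    mappingCone (𝟙 C) ⟶ (zeroDifferential A).obj (opcyclesSequence C).X₂ :=
  toZeroDifferential (V := (opcyclesSequence C).X₂) (coneIdToNext C) (d_comp_coneIdToNext C)

end Opcycles

section ConeSequence

open CochainComplex hiding shiftFunctor

lemma triangleRotateShortComplex_shortExact {K M : CochainComplex A ℤ} (f : K ⟶ M) :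
    (mappingCone.triangleRotateShortComplex f).ShortExact :=
  HomologicalComplex.shortExact_of_degreewise_shortExact _ fun i ↦
    (mappingCone.triangleRotateShortComplexSplitting f i).shortExact

/-- The comparison of the sequence `C ⟶ Cone(𝟙 C) ⟶ C⟦1⟧` with `opcyclesSequence C`. The sign
of the third component is that of the projection from the cone to `C⟦1⟧`. -/
noncomputable def coneSequenceToOpcyclesSequence (C : CochainComplex A ℤ) :
    mappingCone.triangleRotateShortComplex (𝟙 C) ⟶
      (opcyclesSequence C).map (zeroDifferential A) where
  τ₁ := toGradedOpcycles C
  τ₂ := coneIdToGraded C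
  τ₃ := -toGradedOpcycles (C⟦(1 : ℤ)⟧)
  comm₁₂ := HomologicalComplex.hom_ext _ _ fun i ↦
    (C.p_fromOpcycles i (i + 1)).trans (inr_comp_coneIdToNext C i).symm
  comm₂₃ := HomologicalComplex.hom_ext _ _ fun i ↦
    (coneIdToNext_comp_shiftPOpcycles C i).trans (Preadditive.comp_neg _ _).symm

variable {T : Type u₂} [Category.{v₂} T] [HasShift T ℤ]
  [Preadditive T] [HasZeroObject T] [∀ n : ℤ, (shiftFunctor T n).Additive]
  [Pretriangulated T] (L : CochainComplex A ℤ ⥤ T) [L.CommShift ℤ] [IsTriangleValued L]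

open IsTriangleValued

lemma isIso_connecting_triangleRotateShortComplex_id (C : CochainComplex A ℤ) :
    IsIso (connecting L (triangleRotateShortComplex_shortExact (𝟙 C))) := by
  refine (Triangle.isZero₂_iff_isIso₃ _
    (connecting_distinguished L (triangleRotateShortComplex_shortExact (𝟙 C)))).1 ?_
  exact Triangle.isZero₃_of_isIso₁ _ (cone_distinguished L (𝟙 C))
    (inferInstanceAs (IsIso (L.map (𝟙 C))))

lemma exists_iso_comp_map_toGradedOpcycles_shift [L.Additive] {C : CochainComplex A ℤ}
    (hC : ∀ i, C.ExactAt i) :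
    ∃ c : L.obj (C⟦(1 : ℤ)⟧) ≅ (L.obj C)⟦(1 : ℤ)⟧,
      c.hom ≫ (L.map (toGradedOpcycles C))⟦(1 : ℤ)⟧' =
        -L.map (toGradedOpcycles (C⟦(1 : ℤ)⟧)) ≫
          connecting L ((opcyclesSequence_shortExact hC).map_of_exact (zeroDifferential A)) := by
  have h := connecting_naturality L (triangleRotateShortComplex_shortExact (𝟙 C))
    ((opcyclesSequence_shortExact hC).map_of_exact (zeroDifferential A))
    (coneSequenceToOpcyclesSequence C)
  exact ⟨@asIso _ _ _ _ _ (isIso_connecting_triangleRotateShortComplex_id L C),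
    h.trans (congr($(L.map_neg) ≫ _).trans (Preadditive.neg_comp _ _))⟩

end ConeSequence

section ExtToShiftedHom

open Abelian IsTriangleValued

variable [HasExt.{w₁} A]

/-- The `δ`-functor `∏ i, Ext (X i) -` on families of objects. -/
noncomputable def gradedExtDeltaFunctor (X : Discrete ℤ ⥤ A) : DeltaFunctor.{w₁} (Discrete ℤ ⥤ A) :=
  .pi fun i ↦ extDeltaFunctor (X.obj ⟨i⟩)

lemma gradedExtDeltaFunctor_isExact (X : Discrete ℤ ⥤ A) : (gradedExtDeltaFunctor X).IsExact :=
  .pi fun _ ↦ extDeltaFunctor_isExact _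

lemma gradedExtDeltaFunctor_isEffaceable (X : Discrete ℤ ⥤ A) :
    (gradedExtDeltaFunctor X).IsEffaceable :=
  .pi fun _ ↦ extDeltaFunctor_isEffaceable _

/-- The identification of families of degree zero Ext-classes with morphisms of families. -/
noncomputable def gradedExtZeroToHom {X Y : Discrete ℤ ⥤ A} :
    (∀ i, Ext (X.obj ⟨i⟩) (Y.obj ⟨i⟩) 0) →+ (X ⟶ Y) :=
  AddMonoidHom.mk' (fun x ↦ Discrete.natTrans fun i ↦ Ext.addEquiv₀ (x i.as)) fun _ _ ↦
    NatTrans.ext (funext fun _ ↦ map_add Ext.addEquiv₀ _ _)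

lemma gradedExtZeroToHom_comp {X Y Z : Discrete ℤ ⥤ A} (x : ∀ i, Ext (X.obj ⟨i⟩) (Y.obj ⟨i⟩) 0)
    (f : Y ⟶ Z) :
    gradedExtZeroToHom (fun i ↦ (x i).comp (Ext.mk₀ (f.app ⟨i⟩)) (add_zero 0)) =
      gradedExtZeroToHom x ≫ f := by
  ext i
  apply Ext.addEquiv₀.symm.injective
  simp [gradedExtZeroToHom, ← Ext.mk₀_comp_mk₀]

lemma gradedExtZeroToHom_mk₀_id (X : Discrete ℤ ⥤ A) :
    gradedExtZeroToHom (fun i ↦ Ext.mk₀ (𝟙 (X.obj ⟨i⟩))) = 𝟙 X := by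
  ext i
  apply Ext.addEquiv₀.symm.injective
  simp [gradedExtZeroToHom]

variable {T : Type u₂} [Category.{v₂} T] [HasShift T ℤ]
  [Preadditive T] [HasZeroObject T] [∀ n : ℤ, (shiftFunctor T n).Additive]
  [Pretriangulated T] (L : CochainComplex A ℤ ⥤ T) [L.CommShift ℤ] [IsTriangleValued L]
  [L.Additive]

/-- The degree zero part of the comparison of Ext-classes with morphisms in `T`. -/
noncomputable def extZeroToShiftedHom (X : Discrete ℤ ⥤ A) :
    DeltaFunctor.HetNatTrans ((gradedExtDeltaFunctor X).obj 0)
      ((homDeltaFunctor (zeroDifferential A) L (L.obj ((zeroDifferential A).obj X))).obj 0) where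
  app Y := (AddMonoidHom.mk' (ShiftedHom.mk₀ ((0 : ℕ) : ℤ) rfl) (ShiftedHom.mk₀_add _ rfl)).comp
    (L.mapAddHom.comp ((zeroDifferential A).mapAddHom.comp gradedExtZeroToHom))
  naturality {Y Y'} f x := by
    refine (ShiftedHom.comp_mk₀ _ (0 : ℤ) rfl (L.map ((zeroDifferential A).map f))).symm.trans ?_
    refine (ShiftedHom.mk₀_comp_mk₀ _ _ _ _ _).trans ?_
    refine congrArg (ShiftedHom.mk₀ ((0 : ℕ) : ℤ) rfl) ?_
    refine (L.map_comp _ _).symm.trans (congrArg L.map ?_)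
    exact ((zeroDifferential A).map_comp _ _).symm.trans
      (congrArg (zeroDifferential A).map (gradedExtZeroToHom_comp x f).symm)

variable (X : Discrete ℤ ⥤ A)

/-- The comparison of Ext-classes with morphisms in `T`, obtained from the universality of
effaceable `δ`-functors. -/
noncomputable def extToHomDeltaFunctor :
    (gradedExtDeltaFunctor X).Hom
      (homDeltaFunctor (zeroDifferential A) L (L.obj ((zeroDifferential A).obj X))) :=
  (DeltaFunctor.exists_hom_app_zero_eq (gradedExtDeltaFunctor_isExact X)
    (gradedExtDeltaFunctor_isEffaceable X) (extZeroToShiftedHom L X)).choose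

lemma extToHomDeltaFunctor_app_zero :
    (extToHomDeltaFunctor L X).app 0 = extZeroToShiftedHom L X :=
  (DeltaFunctor.exists_hom_app_zero_eq (gradedExtDeltaFunctor_isExact X)
    (gradedExtDeltaFunctor_isEffaceable X) (extZeroToShiftedHom L X)).choose_spec

variable {X}

/-- The morphism between complexes with zero differential given by a family of Ext-classes. -/
noncomputable def extToShiftedHom {Y : Discrete ℤ ⥤ A} {n : ℕ} :
    (∀ i : ℤ, Ext (X.obj ⟨i⟩) (Y.obj ⟨i⟩) n) →+
      ShiftedHom (L.obj ((zeroDifferential A).obj X)) (L.obj ((zeroDifferential A).obj Y))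
        (n : ℤ) :=
  ((extToHomDeltaFunctor L X).app n).app Y

lemma extToShiftedHom_eq_mk₀ {Y : Discrete ℤ ⥤ A} (x : ∀ i, Ext (X.obj ⟨i⟩) (Y.obj ⟨i⟩) 0) :
    extToShiftedHom L x = ShiftedHom.mk₀ ((0 : ℕ) : ℤ) rfl
      (L.map ((zeroDifferential A).map (gradedExtZeroToHom x))) :=
  congr(($(extToHomDeltaFunctor_app_zero L X)).app Y x)

lemma extToShiftedHom_mk₀_id (X : Discrete ℤ ⥤ A) :
    extToShiftedHom L (fun i ↦ Ext.mk₀ (𝟙 (X.obj ⟨i⟩))) =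
      ShiftedHom.mk₀ ((0 : ℕ) : ℤ) rfl (𝟙 _) := by
  rw [extToShiftedHom_eq_mk₀, gradedExtZeroToHom_mk₀_id, (zeroDifferential A).map_id, L.map_id]

lemma extToShiftedHom_comp_extClass {S : ShortComplex (Discrete ℤ ⥤ A)} (hS : S.ShortExact) {n : ℕ}
    (x : ∀ i : ℤ, Ext (X.obj ⟨i⟩) (S.X₃.obj ⟨i⟩) n) :
    extToShiftedHom L (fun i ↦ (x i).comp (shortExact_map_evaluation hS i).extClass rfl) =
      (extToShiftedHom L x).comp (connecting L (hS.map_of_exact (zeroDifferential A)))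
        (by push_cast; ring) :=
  (extToHomDeltaFunctor L X).app_δ hS x

end ExtToShiftedHom

section FactorsThroughExt

open Abelian IsTriangleValued

variable [HasExt.{w₁} A] {T : Type u₂} [Category.{v₂} T] [HasShift T ℤ]
  [Preadditive T] [HasZeroObject T] [∀ n : ℤ, (shiftFunctor T n).Additive]
  [Pretriangulated T] (L : CochainComplex A ℤ ⥤ T) [L.CommShift ℤ] [IsTriangleValued L]
  [L.Additive]

/-- `f` is the composition of a morphism to a complex with zero differential and of a family of
Ext-classes of degree `n`. -/
def FactorsThroughExt {M : T} {Y : Discrete ℤ ⥤ A} {n : ℕ}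
    (f : ShiftedHom M (L.obj ((zeroDifferential A).obj Y)) (n : ℤ)) : Prop :=
  ∃ (X : Discrete ℤ ⥤ A) (m : M ⟶ L.obj ((zeroDifferential A).obj X))
    (x : ∀ i : ℤ, Ext (X.obj ⟨i⟩) (Y.obj ⟨i⟩) n), f = m ≫ extToShiftedHom L x

variable {L}

lemma factorsThroughExt_zero {M : T} {Y : Discrete ℤ ⥤ A}
    (f : ShiftedHom M (L.obj ((zeroDifferential A).obj Y)) ((0 : ℕ) : ℤ)) :
    FactorsThroughExt L f := by
  refine ⟨Y, (ShiftedHom.homEquiv ((0 : ℕ) : ℤ) rfl).symm f, fun i ↦ Ext.mk₀ (𝟙 (Y.obj ⟨i⟩)), ?_⟩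
  rw [extToShiftedHom_mk₀_id]
  simp [ShiftedHom.homEquiv, ShiftedHom.mk₀]

lemma FactorsThroughExt.comp_connecting {M : T} {S : ShortComplex (Discrete ℤ ⥤ A)}
    (hS : S.ShortExact) {n : ℕ}
    {f : ShiftedHom M (L.obj ((zeroDifferential A).obj S.X₃)) (n : ℤ)}
    (hf : FactorsThroughExt L f) :
    FactorsThroughExt L (n := n + 1)
      (f.comp (connecting L (hS.map_of_exact (zeroDifferential A))) (by push_cast; ring)) := by
  obtain ⟨X, m, x, rfl⟩ := hf
  exact ⟨X, m, _, (Category.assoc _ _ _).trans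
    (congrArg (m ≫ ·) (extToShiftedHom_comp_extClass L hS x).symm)⟩

lemma FactorsThroughExt.eq_zero {n : ℕ} (hn : ∀ X Y : A, Subsingleton (Ext X Y n)) {M : T}
    {Y : Discrete ℤ ⥤ A} {f : ShiftedHom M (L.obj ((zeroDifferential A).obj Y)) (n : ℤ)}
    (hf : FactorsThroughExt L f) : f = 0 := by
  obtain ⟨X, m, x, rfl⟩ := hf
  obtain rfl : x = 0 := funext fun i ↦ (hn _ _).elim _ _
  exact congr(m ≫ $(map_zero _)).trans comp_zero

theorem factorsThroughExt_comp_map_toGradedOpcycles {n : ℕ} {C : CochainComplex A ℤ}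
    (hC : ∀ i, C.ExactAt i) {M : T} (x : ShiftedHom M (L.obj C) (n : ℤ)) :
    FactorsThroughExt L (x ≫ (L.map (toGradedOpcycles C))⟦(n : ℤ)⟧') := by
  induction n generalizing C with
  | zero => exact factorsThroughExt_zero _
  | succ n ih =>
    have hS := opcyclesSequence_shortExact hC
    obtain ⟨c, hc⟩ := exists_iso_comp_map_toGradedOpcycles_shift L hC
    obtain ⟨y, rfl⟩ := exists_shiftedHom_comp_iso_hom_eq c x
      (show (1 : ℤ) + n = (n + 1 : ℕ) by push_cast; ring)
    have hy : (y.comp (Y := L.obj _) (Z := L.obj C) c.hom (by push_cast; ring)) ≫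
          (L.map (toGradedOpcycles C))⟦((n + 1 : ℕ) : ℤ)⟧' =
        ShiftedHom.comp (Y := L.obj _) ((-y) ≫ (L.map (toGradedOpcycles (C⟦(1 : ℤ)⟧)))⟦(n : ℤ)⟧')
          (connecting L (hS.map_of_exact (zeroDifferential A))) (by push_cast; ring) := by
      refine (shiftedHom_comp_comp_shift_map y c.hom _ _).symm.trans ?_
      refine Eq.trans ?_ (shiftedHom_comp_shift_map_comp (Y := L.obj _) (-y) _ _ _).symm
      refine (congrArg (ShiftedHom.comp y · _) hc).trans ?_
      exact (ShiftedHom.comp_neg y _ _).trans (ShiftedHom.neg_comp y _ _).symm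
    rw [hy]
    exact (ih (exactAt_shift hC 1) (-y)).comp_connecting hS

lemma map_toGradedOpcycles_eq_zero {n : ℕ} (hn : ∀ X Y : A, Subsingleton (Ext X Y n))
    {C : CochainComplex A ℤ} (hC : ∀ i, C.ExactAt i) : L.map (toGradedOpcycles C) = 0 := by
  apply (shiftFunctor T (n : ℤ)).map_injective
  have := (factorsThroughExt_comp_map_toGradedOpcycles hC (𝟙 ((L.obj C)⟦(n : ℤ)⟧))).eq_zero hn
  rwa [Category.id_comp, ← Functor.map_zero] at this

end FactorsThroughExt

section AbsoluteDerivedCategory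

open CochainComplex hiding shiftFunctor
open HomotopyCategory

variable (A) in
/-- The full subcategory of absolutely acyclic complexes. -/
def absolutelyAcyclic : ObjectProperty (HomotopyCategory A (ComplexShape.up ℤ)) :=
  fun X ↦ IsAbsolutelyAcyclic X

instance : (absolutelyAcyclic A).IsTriangulated where
  exists_zero := ⟨_, isZero_zero _, fun _ hP ↦ hP.zero _ (isZero_zero _)⟩
  isStableUnderShiftBy n := ⟨fun X hX P hP ↦ hP.shift X n (hX P hP)⟩
  toIsTriangulatedClosed₂ := ⟨fun Δ hΔ h₁ h₃ ↦
    ObjectProperty.le_isoClosure _ _ fun P hP ↦ hP.ext₂ Δ hΔ (h₁ P hP) (h₃ P hP)⟩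

instance : (absolutelyAcyclic A).IsStableUnderRetracts where
  of_retract {X Y} r hY P hP := by
    obtain ⟨Z, ⟨e⟩⟩ := exists_iso_biprod_of_retract r
    exact hP.smd X Z (hP.iso e (hY P hP))

lemma quotient_obj_totSES_iff {P : ObjectProperty (HomotopyCategory A (ComplexShape.up ℤ))}
    [P.IsStableUnderShift ℤ] [P.IsClosedUnderIsomorphisms]
    (S : ShortComplex (CochainComplex A ℤ)) :
    P ((quotient A (ComplexShape.up ℤ)).obj (totSES S.f S.g S.zero)) ↔
      P.trW ((quotient A (ComplexShape.up ℤ)).map (mappingCone.descShortComplex S)) :=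
  (P.prop_iff_of_iso
    (((quotient A (ComplexShape.up ℤ)).commShiftIso (-1 : ℤ)).app
      (mappingCone (mappingCone.descShortComplex S)))).trans
  ((P.prop_shift_iff_of_isStableUnderShift _ (-1 : ℤ)).trans
    (P.trW_iff_of_distinguished _
      (mappingCone_triangleh_distinguished (mappingCone.descShortComplex S))).symm)

lemma totClosed_subcategoryAcyclic : TotClosed (A := A) (subcategoryAcyclic A) where
  tot f g hfg hS := by
    refine (quotient_obj_totSES_iff (ShortComplex.mk f g hfg)).2 ?_
    rw [← quasiIso_eq_trW_subcategoryAcyclic, quotient_map_mem_quasiIso_iff]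
    exact mappingCone.quasiIso_descShortComplex hS
  zero _ := ObjectProperty.prop_of_isZero _
  iso e := ObjectProperty.prop_of_iso _ e
  shift _ n := ObjectProperty.le_shift _ n _
  ext₂ Δ hΔ := ObjectProperty.ext_of_isTriangulatedClosed₂ _ Δ hΔ
  smd _ _ h n := (h n).of_mono ((homologyFunctor A (ComplexShape.up ℤ) 0).map
    ((shiftFunctor _ n).map biprod.inl))

lemma absolutelyAcyclic_le_subcategoryAcyclic : absolutelyAcyclic A ≤ subcategoryAcyclic A :=
  fun _ hX ↦ hX _ totClosed_subcategoryAcyclic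

variable (A) in
/-- The absolute derived category of `A`. -/
abbrev AbsoluteDerivedCategory := (absolutelyAcyclic A).trW.Localization

namespace AbsoluteDerivedCategory

variable (A) in
/-- The functor from complexes to the absolute derived category. -/
noncomputable def Q : CochainComplex A ℤ ⥤ AbsoluteDerivedCategory A :=
  quotient A (ComplexShape.up ℤ) ⋙ (absolutelyAcyclic A).trW.Q

noncomputable instance : (Q A).CommShift ℤ :=
  inferInstanceAs ((quotient A (ComplexShape.up ℤ) ⋙ (absolutelyAcyclic A).trW.Q).CommShift ℤ)

instance : (Q A).Additive :=
  inferInstanceAs (quotient A (ComplexShape.up ℤ) ⋙ (absolutelyAcyclic A).trW.Q).Additive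

instance : IsTriangleValued (Q A) where
  cone_distinguished f :=
    isomorphic_distinguished _ ((absolutelyAcyclic A).trW.Q.map_distinguished _
      (mappingCone_triangleh_distinguished f)) _
      ((Functor.mapTriangleCompIso (quotient A (ComplexShape.up ℤ))
        (absolutelyAcyclic A).trW.Q).app (mappingCone.triangle f))
  isIso_map_descShortComplex {S} hS :=
    Localization.inverts (absolutelyAcyclic A).trW.Q (absolutelyAcyclic A).trW _
      ((quotient_obj_totSES_iff S).1 fun _ hP ↦ hP.tot S.f S.g S.zero hS)

lemma exists_comp_eq_Q_map {C M : CochainComplex A ℤ} (hC : ∀ i, C.ExactAt i)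
    (φ : (Q A).obj C ⟶ (Q A).obj M) :
    ∃ (K : CochainComplex A ℤ) (_ : ∀ i, K.ExactAt i) (s : (Q A).obj K ⟶ (Q A).obj C) (_ : IsIso s)
      (f : K ⟶ M), s ≫ φ = (Q A).map f := by
  obtain ⟨⟨s, hs, f⟩, hφ⟩ := Localization.exists_rightFraction (absolutelyAcyclic A).trW.Q
    (absolutelyAcyclic A).trW φ
  obtain ⟨K, rfl⟩ := quotient_obj_surjective ‹_›
  obtain ⟨f, rfl⟩ := (quotient A (ComplexShape.up ℤ)).map_surjective f
  refine ⟨K, ?_, (absolutelyAcyclic A).trW.Q.map s, Localization.inverts _ _ _ hs, f, ?_⟩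
  · rw [← quotient_obj_mem_subcategoryAcyclic_iff_exactAt] at hC ⊢
    obtain ⟨Z, _, _, hΔ, hZ⟩ := hs
    exact ObjectProperty.ext_of_isTriangulatedClosed₁ _ _ hΔ hC
      (absolutelyAcyclic_le_subcategoryAcyclic _ hZ)
  · rw [hφ]
    exact MorphismProperty.RightFraction.map_s_comp_map (.mk s hs _) _ _

section FiniteGlobalDimension

open Abelian IsTriangleValued

variable [HasExt.{w₁} A] {n : ℕ} (hn : ∀ X Y : A, Subsingleton (Ext X Y n))
  {C : CochainComplex A ℤ} (hC : ∀ i, C.ExactAt i)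
include hn hC

lemma hom_Q_zeroDifferential_eq_zero {V : Discrete ℤ ⥤ A}
    (φ : (Q A).obj C ⟶ (Q A).obj ((zeroDifferential A).obj V)) : φ = 0 := by
  obtain ⟨K, hK, s, _, f, hsφ⟩ := exists_comp_eq_Q_map hC φ
  obtain ⟨t, rfl⟩ := exists_toGradedOpcycles_comp_eq f
  rw [Functor.map_comp, map_toGradedOpcycles_eq_zero hn hK, zero_comp] at hsφ
  rwa [← cancel_epi s, comp_zero]

theorem isZero_Q_obj : IsZero ((Q A).obj C) := by
  obtain ⟨V, j, hj, hS⟩ := exists_shortExact_toGradedOpcycles C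
  obtain ⟨t, ht⟩ := Triangle.coyoneda_exact₂ _
    (connecting_distinguished (Q A) hS) (𝟙 _)
    (hom_Q_zeroDifferential_eq_zero hn hC _)
  rw [hom_Q_zeroDifferential_eq_zero hn hC t] at ht
  exact (IsZero.iff_id_eq_zero _).2 (ht.trans zero_comp)

end FiniteGlobalDimension

end AbsoluteDerivedCategory

end AbsoluteDerivedCategory

/-- In an abelian category of finite global dimension (i.e. `Ext^{d+1}`
vanishes identically for some `d`), every acyclic cochain complex is absolutely
acyclic. -/
theorem stmt_11 [HasExt.{w} A] (d : ℕ)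
    (hgl : ∀ X Y : A, Subsingleton (Abelian.Ext X Y (d + 1)))
    (C : CochainComplex A ℤ) (hac : ∀ n, C.ExactAt n) :
    IsAbsolutelyAcyclic ((HomotopyCategory.quotient A (ComplexShape.up ℤ)).obj C) :=
  prop_of_isZero_localization_obj (absolutelyAcyclic A) (absolutelyAcyclic A).trW.Q
    (AbsoluteDerivedCategory.isZero_Q_obj hgl hac)
end

section
/- Let X be a regular noetherian scheme of Krull dimension d. Then the abelian category Qcoh(X) of quasi-coherent sheaves on X has global dimension equal to d. -/
open CategoryTheory CategoryTheory.Limits CategoryTheory.Abelian AlgebraicGeometry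

/-- A (noetherian) local ring is regular if its maximal ideal can be generated by
(Krull-dimension many) elements. -/
def IsRegularLocal (O : Type u) [CommRing O] [IsLocalRing O] : Prop :=
  ∃ s : Finset O, Ideal.span (s : Set O) = IsLocalRing.maximalIdeal O ∧
    (s.card : WithBot ℕ∞) = ringKrullDim O

/-!
Having global dimension at most `n` is local on `X`. Over a noetherian ring every injective module
is the sum of a part on which `a` is locally nilpotent and one on which it is bijective, so the
sheaf `J~` on an affine chart `f : Spec A ⟶ X` extends to `f_* J~`, which is again injective on
every chart. Adjunction with restriction then makes `f_* J~` injective in `Qcoh(X)`, and every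
quasi-coherent sheaf embeds into a finite product of such sheaves. Hence injectivity, and with it
injective dimension, is detected on the charts. On `Spec A` it is detected at the primes of `A`,
and over a regular local ring the dimension is computed by the residue field: its projective
dimension is the length of a regular sequence generating the maximal ideal, namely the Krull
dimension, and by noetherian induction it bounds the projective dimension of every cyclic module.
-/

namespace QcohGlobalDimension

section InjectiveModules

variable {A : Type*} [CommRing A] {M N P Q : Type*} [AddCommGroup M] [Module A M]
  [AddCommGroup N] [Module A N] [AddCommGroup P] [Module A P] [AddCommGroup Q] [Module A Q]

theorem exists_comp_eq_of_ker_le (hM : Module.Baer A M) (q : P →ₗ[A] Q) (g : P →ₗ[A] M)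
    (hqg : LinearMap.ker q ≤ LinearMap.ker g) : ∃ ψ : Q →ₗ[A] M, ψ ∘ₗ q = g := by
  obtain ⟨ψ, hψ⟩ := hM.extension_property ((LinearMap.ker q).liftQ q le_rfl)
    (LinearMap.ker_eq_bot.1 (Submodule.ker_liftQ_eq_bot _ _ _ le_rfl))
    ((LinearMap.ker q).liftQ g hqg)
  exact ⟨ψ, LinearMap.ext fun x ↦ LinearMap.congr_fun hψ (Submodule.Quotient.mk x)⟩

theorem baer_of_leftInverse (hM : Module.Baer A M) (i : N →ₗ[A] M) (r : M →ₗ[A] N)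
    (hri : r ∘ₗ i = LinearMap.id) : Module.Baer A N := fun J g ↦ by
  obtain ⟨g', hg'⟩ := hM J (i ∘ₗ g)
  refine ⟨r ∘ₗ g', fun x hx ↦ ?_⟩
  rw [LinearMap.comp_apply, hg']
  exact LinearMap.congr_fun hri _

theorem exists_smul_eq_zero_of_torsion' (S : Submonoid A) [Module.Finite A P]
    (g : P →ₗ[A] Submodule.torsion' A M S) : ∃ s ∈ S, ∀ x, s • g x = 0 := by
  classical
  obtain ⟨t, ht⟩ := Module.Finite.fg_top (R := A) (M := P)
  choose s hs using fun x ↦ Submodule.torsion'_isTorsion' S (x := g x)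
  refine ⟨∏ x ∈ t, s x, prod_mem fun x _ ↦ (s x).2, fun x ↦ ?_⟩
  suffices ⊤ ≤ LinearMap.ker ((∏ x ∈ t, (s x : A)) • g) from this trivial
  rw [← ht, Submodule.span_le]
  intro x hx
  change (∏ x ∈ t, (s x : A)) • g x = 0
  rw [← Finset.prod_erase_mul t _ hx, mul_smul]
  exact (congrArg _ (hs x)).trans (smul_zero _)

theorem exists_pow_mul_mem_imp [IsNoetherianRing A] (J : Ideal A) (s : A) :
    ∃ k, ∀ y, s ^ k * y ∈ J → ∃ z ∈ J, s ^ k * y = s * z := by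
  obtain ⟨k, hk⟩ := Ideal.exists_pow_inf_eq_pow_smul (Ideal.span {s}) (J : Submodule A A)
  refine ⟨k + 1, fun y hy ↦ ?_⟩
  have hmem : s ^ (k + 1) * y ∈ Ideal.span {s} ^ (k + 1) • (⊤ : Submodule A A) ⊓ J :=
    ⟨by simpa [Ideal.span_singleton_pow] using
      Ideal.mul_mem_right _ _ (Ideal.mem_span_singleton_self _), hy⟩
  rw [hk (k + 1) k.le_succ, Nat.add_sub_cancel_left, pow_one,
    Submodule.ideal_span_singleton_smul] at hmem
  obtain ⟨z, hz, hz_eq⟩ := hmem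
  exact ⟨z, hz.2, hz_eq.symm⟩

theorem baer_torsion' [IsNoetherianRing A] (S : Submonoid A) (hM : Module.Baer A M) :
    Module.Baer A (Submodule.torsion' A M S) := fun J g ↦ by
  obtain ⟨s, hs, hsg⟩ := exists_smul_eq_zero_of_torsion' S g
  obtain ⟨k, hk⟩ := exists_pow_mul_mem_imp J s
  let q : A →ₗ[A] A ⧸ Ideal.span {s ^ k} := (Ideal.span {s ^ k}).mkQ
  have hker : LinearMap.ker (q ∘ₗ J.subtype) ≤
      LinearMap.ker ((Submodule.torsion' A M S).subtype ∘ₗ g) := by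
    rintro ⟨x, hx⟩ hqx
    obtain ⟨y, rfl⟩ := Ideal.mem_span_singleton.1 ((Submodule.Quotient.mk_eq_zero _).1 hqx)
    obtain ⟨z, hz, hyz⟩ := hk y hx
    have : (⟨s ^ k * y, hx⟩ : J) = s • ⟨z, hz⟩ := Subtype.ext hyz
    rw [this, LinearMap.mem_ker, map_smul]
    exact congrArg Subtype.val (hsg ⟨z, hz⟩)
  obtain ⟨ψ, hψ⟩ := exists_comp_eq_of_ker_le hM _ _ hker
  refine ⟨(ψ ∘ₗ q).codRestrict _ fun x ↦ ?_, fun x hx ↦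
    Subtype.ext (LinearMap.congr_fun hψ ⟨x, hx⟩)⟩
  have hqx : s ^ k • q x = 0 :=
    (Submodule.Quotient.mk_eq_zero _).2
      (Ideal.mul_mem_right _ _ (Ideal.mem_span_singleton_self _))
  refine (Submodule.mem_torsion'_iff _ _).2 ⟨⟨s ^ k, pow_mem hs k⟩, ?_⟩
  change s ^ k • ψ (q x) = 0
  rw [← map_smul, hqx, map_zero]

theorem smul_bijective_of_disjoint_torsion' {S : Submonoid A} {K : Submodule A M}
    (hK : Module.Baer A K) (hSK : Disjoint (Submodule.torsion' A M S) K) {s : A} (hs : s ∈ S) :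
    Function.Bijective fun x : K ↦ s • x := by
  have eq_zero (x : K) (hx : s • x = 0) : x = 0 := Subtype.ext <|
    Submodule.disjoint_def.1 hSK x
      ((Submodule.mem_torsion'_iff _ _).2 ⟨⟨s, hs⟩, congrArg Subtype.val hx⟩) x.2
  refine ⟨fun x y hxy ↦ sub_eq_zero.1 (eq_zero _ (by simpa [smul_sub, sub_eq_zero] using hxy)),
    fun x ↦ ?_⟩
  obtain ⟨ψ, hψ⟩ := exists_comp_eq_of_ker_le hK (LinearMap.toSpanSingleton A A s)
    (LinearMap.toSpanSingleton A K x) fun c hc ↦ eq_zero _ <| by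
      have hcs : c * s = 0 := hc
      rw [LinearMap.toSpanSingleton_apply, smul_smul, mul_comm, hcs, zero_smul]
  exact ⟨ψ 1, by simpa [← map_smul] using LinearMap.congr_fun hψ 1⟩

theorem exists_isCompl_torsion' [IsNoetherianRing A] (S : Submonoid A) (hM : Module.Baer A M) :
    ∃ K : Submodule A M, IsCompl (Submodule.torsion' A M S) K ∧ Module.Baer A K ∧
      ∀ s ∈ S, Function.Bijective fun x : K ↦ s • x := by
  obtain ⟨r, hr⟩ := (baer_torsion' S hM).extension_property (Submodule.torsion' A M S).subtype
    (Submodule.injective_subtype _) LinearMap.id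
  have hcompl : IsCompl (Submodule.torsion' A M S) (LinearMap.ker r) :=
    LinearMap.isCompl_of_proj (LinearMap.congr_fun hr)
  have hbaer : Module.Baer A (LinearMap.ker r) :=
    baer_of_leftInverse hM _ (Submodule.projectionOnto _ _ hcompl.symm)
      (Submodule.projectionOnto_comp_subtype hcompl.symm)
  exact ⟨_, hcompl, hbaer, fun s hs ↦ smul_bijective_of_disjoint_torsion' hbaer hcompl.disjoint hs⟩

-- Every injective module is the direct sum of its `a`-power torsion and a complement on which
-- `a` acts bijectively; iterate over the elements `a` of `t`.
theorem injective_induction {A : Type u} [CommRing A] [IsNoetherianRing A]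
    (P : ObjectProperty (ModuleCat.{u} A)) [P.IsClosedUnderIsomorphisms]
    (biprod : ∀ M N, P M → P N → P (M ⊞ N)) (t : Finset A)
    (torsion : ∀ J : ModuleCat.{u} A, Injective J →
      (∀ a ∈ t, Submodule.torsion' A J (Submonoid.powers a) = ⊤) → P J)
    (bijective : ∀ J : ModuleCat.{u} A, Injective J → ∀ a ∈ t,
      Function.Bijective (fun x : J ↦ a • x) → P J)
    (I : ModuleCat.{u} A) (hI : Injective I) : P I := by
  classical
  induction t using Finset.induction_on generalizing I with
  | empty => exact torsion I hI (by simp)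
  | insert a t _ ih =>
    refine ih (fun J hJ ht ↦ ?_)
      (fun J hJ b hb ↦ bijective J hJ b (Finset.mem_insert_of_mem hb)) I hI
    have baer : Module.Baer A J :=
      Module.Baer.of_injective ((Module.injective_iff_injective_object A J).2 hJ)
    obtain ⟨K, hcompl, hK, hbij⟩ := exists_isCompl_torsion' (Submonoid.powers a) baer
    have injective {N : Type u} [AddCommGroup N] [Module A N] (hN : Module.Baer A N) :
        Injective (ModuleCat.of A N) := (Module.injective_iff_injective_object A N).1 hN.injective
    refine P.prop_of_iso (ModuleCat.biprodIsoProd (.of A (Submodule.torsion' A J _)) (.of A K) ≪≫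
      (Submodule.prodEquivOfIsCompl _ _ hcompl).toModuleIso) (biprod _ _ (torsion _ (injective
        (baer_torsion' _ baer)) ?_) (bijective _ (injective hK) a (Finset.mem_insert_self a t)
          (hbij a (Submonoid.mem_powers a))))
    intro b hb
    obtain rfl | hb := Finset.mem_insert.1 hb
    · exact Submodule.torsion'_torsion'_eq_top _
    · rw [Submodule.eq_top_iff']
      intro x
      obtain ⟨s, hs⟩ := (Submodule.mem_torsion'_iff _ x.1).1 (ht b hb ▸ Submodule.mem_top)
      exact (Submodule.mem_torsion'_iff _ _).2 ⟨s, Subtype.ext hs⟩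

end InjectiveModules

section RegularLocalRings

open IsLocalRing RingTheory.Sequence

theorem exists_isPrime_ringKrullDim_le_quotient (R : Type*) [CommRing R] [FiniteRingKrullDim R] :
    ∃ p : Ideal R, p.IsPrime ∧ ringKrullDim R ≤ ringKrullDim (R ⧸ p) := by
  let l := LTSeries.longestOf (PrimeSpectrum R)
  refine ⟨l.head.asIdeal, l.head.isPrime, ?_⟩
  rw [ringKrullDim_quotient, ringKrullDim, Order.krullDim_eq_length_of_finiteDimensionalOrder]
  exact Order.LTSeries.length_le_krullDim
    ⟨l.length, fun i ↦ ⟨l i, LTSeries.head_le l i⟩, fun i ↦ l.step i⟩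

variable {R : Type*} [CommRing R] [IsLocalRing R] [IsNoetherianRing R]

-- A prime `p` with `dim R/p = dim R` lies in `(x)` and misses `x`, so `p = x p` and Nakayama's
-- lemma gives `p = 0`.
theorem isDomain_of_isDomain_quotient_span_singleton {x : R} (hx : x ∈ maximalIdeal R)
    [IsDomain (R ⧸ Ideal.span {x})] (hdim : ringKrullDim (R ⧸ Ideal.span {x}) < ringKrullDim R) :
    IsDomain R := by
  obtain ⟨p, hp, hp_dim⟩ := exists_isPrime_ringKrullDim_le_quotient R
  have : IsLocalRing (R ⧸ p) :=
    .of_surjective' (Ideal.Quotient.mk p) Ideal.Quotient.mk_surjective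
  have p_le : p ≤ Ideal.span {x} := by
    intro y hy
    by_contra hyx
    have hx_jac : {Ideal.Quotient.mk p x} ⊆ (Ring.jacobson (R ⧸ p) : Set (R ⧸ p)) := by
      rw [IsLocalRing.ringJacobson_eq_maximalIdeal, Set.singleton_subset_iff]
      rw [← IsLocalRing.map_maximalIdeal_of_surjective _ Ideal.Quotient.mk_surjective]
      exact Ideal.mem_map_of_mem _ hx
    have hdim_p := ringKrullDim_le_ringKrullDim_quotient_add_encard _ hx_jac
    have hdim_x := ringKrullDim_succ_le_of_surjective
      (Ideal.quotientMap (Ideal.span {Ideal.Quotient.mk p x}) (Ideal.Quotient.mk p)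
        (I := Ideal.span {x}) (by
          rw [Ideal.span_le, Set.singleton_subset_iff]
          exact Ideal.mem_span_singleton_self _))
      (Ideal.quotientMap_surjective Ideal.Quotient.mk_surjective)
      (mem_nonZeroDivisors_of_ne_zero (mt Ideal.Quotient.eq_zero_iff_mem.1 hyx))
      (by simp [Ideal.Quotient.eq_zero_iff_mem.2 hy])
    rw [Set.encard_singleton] at hdim_p
    exact ((hp_dim.trans hdim_p).trans hdim_x).not_gt hdim
  have x_notMem : x ∉ p := fun hxp ↦ by
    obtain rfl : p = Ideal.span {x} :=
      p_le.antisymm ((Ideal.span_singleton_le_iff_mem _).2 hxp)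
    exact hp_dim.not_gt hdim
  have p_le_smul : p ≤ Ideal.span {x} • p := fun y hy ↦ by
    obtain ⟨z, rfl⟩ := Ideal.mem_span_singleton.1 (p_le hy)
    exact Submodule.smul_mem_smul (Ideal.mem_span_singleton_self x)
      ((hp.mem_or_mem hy).resolve_left x_notMem)
  have p_eq_bot : p = ⊥ := Submodule.eq_bot_of_le_smul_of_le_jacobson_bot _ _
    (IsNoetherian.noetherian p) p_le_smul
    (((Ideal.span_singleton_le_iff_mem _).2 hx).trans (maximalIdeal_le_jacobson _))
  exact IsDomain.of_bot_isPrime (hbp := p_eq_bot ▸ hp)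

theorem ringKrullDim_le_length_of_ofList_eq {rs : List R}
    (hrs : Ideal.ofList rs = maximalIdeal R) : ringKrullDim R ≤ rs.length := by
  classical
  calc ringKrullDim R ≤ (maximalIdeal R).spanFinrank := ringKrullDim_le_spanFinrank_maximalIdeal R
    _ ≤ (rs.toFinset.card : ℕ) := by
      rw [← hrs, Ideal.ofList, ← Set.ncard_coe_finset, List.coe_toFinset]
      exact Nat.cast_le.2 (Submodule.spanFinrank_span_le_ncard_of_finite rs.finite_toSet)
    _ ≤ rs.length := Nat.cast_le.2 rs.toFinset_card_le

theorem ofList_eq_maximalIdeal_of_ofList_cons_eq {R : Type*} [CommRing R] [IsLocalRing R] {x : R}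
    {rs : List R} [IsLocalRing (R ⧸ Ideal.span {x})]
    (hrs : Ideal.ofList (x :: rs) = maximalIdeal R) :
    Ideal.ofList (rs.map (Ideal.Quotient.mk (Ideal.span {x}))) =
      maximalIdeal (R ⧸ Ideal.span {x}) := by
  rw [← map_maximalIdeal_of_surjective _ Ideal.Quotient.mk_surjective, ← hrs,
    Ideal.ofList_cons, Ideal.map_sup, Ideal.map_quotient_self, bot_sup_eq, Ideal.map_ofList]

theorem isWeaklyRegular_cons_of_isDomain {R : Type*} [CommRing R] [IsDomain R] {x : R}
    {rs : List R} (hx : x ≠ 0) (hrs : IsWeaklyRegular (R ⧸ Ideal.span {x})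
      (rs.map (Ideal.Quotient.mk (Ideal.span {x})))) : IsWeaklyRegular R (x :: rs) := by
  let e : (R ⧸ Ideal.span {x}) ≃ₗ[R] QuotSMulTop x R := Submodule.quotEquivOfEq _ _ <| by
    rw [← Submodule.ideal_span_singleton_smul, smul_eq_mul, Ideal.mul_top]
  exact (isWeaklyRegular_cons_iff R x rs).2 ⟨(IsRegular.of_ne_zero hx).left,
    (e.isWeaklyRegular_congr rs).1 ((isWeaklyRegular_map_algebraMap_iff _ _ rs).1 hrs)⟩

theorem isDomain_and_isWeaklyRegular_of_ofList_eq_maximalIdeal {R : Type*} [CommRing R]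
    [IsLocalRing R] [IsNoetherianRing R] {rs : List R} (hrs : Ideal.ofList rs = maximalIdeal R)
    (hdim : rs.length ≤ ringKrullDim R) : IsDomain R ∧ IsWeaklyRegular R rs := by
  obtain ⟨n, hn⟩ : ∃ n, rs.length = n := ⟨_, rfl⟩
  induction n generalizing R with
  | zero =>
    obtain rfl := List.length_eq_zero_iff.1 hn
    exact ⟨(isField_iff_maximalIdeal_eq.2 (hrs.symm.trans Ideal.ofList_nil)).isDomain,
      IsWeaklyRegular.nil R R⟩
  | succ n ih =>
    obtain ⟨x, rs, rfl⟩ := List.exists_cons_of_length_eq_add_one hn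
    have hx : x ∈ maximalIdeal R := hrs ▸ Ideal.subset_span List.mem_cons_self
    have : Nontrivial (R ⧸ Ideal.span {x}) :=
      Ideal.Quotient.nontrivial_iff.2 (mt Ideal.span_singleton_eq_top.1 hx)
    have : IsLocalRing (R ⧸ Ideal.span {x}) :=
      .of_surjective' (Ideal.Quotient.mk _) Ideal.Quotient.mk_surjective
    have hrs' := ofList_eq_maximalIdeal_of_ofList_cons_eq hrs
    have hlen : (rs.map (Ideal.Quotient.mk (Ideal.span {x}))).length = n := by simpa using hn
    have hdim' : (n : WithBot ℕ∞) ≤ ringKrullDim (R ⧸ Ideal.span {x}) := by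
      rw [hn, ← maximalIdeal_height_eq_ringKrullDim] at hdim
      exact ENat.WithBot.add_le_add_one_right_iff.1
        (hdim.trans (Ideal.height_le_ringKrullDim_quotient_add_one hx))
    obtain ⟨hdomain, hreg⟩ := ih hrs' (by rwa [hlen]) hlen
    have hlt : ringKrullDim (R ⧸ Ideal.span {x}) < ringKrullDim R := by
      refine (ringKrullDim_le_length_of_ofList_eq hrs').trans_lt (lt_of_lt_of_le ?_ hdim)
      rw [hlen, hn]
      exact_mod_cast n.lt_succ_self
    have : IsDomain R := isDomain_of_isDomain_quotient_span_singleton hx hlt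
    refine ⟨this, isWeaklyRegular_cons_of_isDomain ?_ hreg⟩
    rintro rfl
    exact hlt.ne (ringKrullDim_eq_of_ringEquiv
      ((Ideal.quotEquivOfEq (Ideal.span_singleton_eq_bot.2 rfl)).trans (RingEquiv.quotientBot R)))

end RegularLocalRings

section GlobalDimension

variable {C : Type*} [Category* C] [Abelian C]

variable (C) in
/-- The abelian category `C` has global dimension at most `n`. Phrased through injective
dimensions, this does not mention the universe of the `Ext` groups. -/
def HasGlobalDimensionLE (n : ℕ) : Prop :=
  ∀ X : C, HasInjectiveDimensionLE X n

theorem subsingleton_ext_of_injective [HasExt.{w} C] {S : ShortComplex C} (hS : S.ShortExact)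
    [Injective S.X₂] (M : C) (n : ℕ) [Subsingleton (Ext M S.X₁ (n + 2))] :
    Subsingleton (Ext M S.X₃ (n + 1)) := by
  refine subsingleton_of_forall_eq 0 fun x ↦ ?_
  obtain ⟨y, rfl⟩ := Ext.covariant_sequence_exact₃ M hS x rfl (Subsingleton.elim _ _)
  rw [Ext.eq_zero_of_injective y, Ext.zero_comp]

theorem hasInjectiveDimensionLE_of_subsingleton_ext [HasExt.{w} C] [EnoughInjectives C]
    {κ : Type*} (T : κ → C)
    (hT : ∀ N : C, (∀ i, Subsingleton (Ext (T i) N 1)) → Injective N) {n : ℕ} {N : C}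
    (h : ∀ i, Subsingleton (Ext (T i) N (n + 1))) : HasInjectiveDimensionLE N n := by
  induction n generalizing N with
  | zero => exact injective_iff_hasInjectiveDimensionLT_one.1 (hT N h)
  | succ n ih =>
    let S : ShortComplex C := .mk (Injective.ι N) (cokernel.π _) (cokernel.condition _)
    have hS : S.ShortExact := { exact := ShortComplex.exact_cokernel _ }
    have : Injective S.X₂ := inferInstanceAs (Injective (Injective.under N))
    refine (hS.hasInjectiveDimensionLT_X₃_iff n inferInstance).1 (ih fun i ↦ ?_)
    have : Subsingleton (Ext (T i) S.X₁ (n + 2)) := h i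
    exact subsingleton_ext_of_injective hS (T i) n

theorem forall_subsingleton_ext_iff_hasGlobalDimensionLE [HasExt.{w} C] [EnoughInjectives C]
    {n : ℕ} : (∀ M N : C, Subsingleton (Ext M N (n + 1))) ↔ HasGlobalDimensionLE C n := by
  refine ⟨fun h N ↦ hasInjectiveDimensionLE_of_subsingleton_ext id
    (fun _ hN ↦ injective_iff_subsingleton_ext_one.2 fun Y ↦ hN Y) (h · N), fun h M N ↦ ?_⟩
  have := h N
  exact HasInjectiveDimensionLT.subsingleton N (n + 1) _ le_rfl M

theorem HasGlobalDimensionLE.hasProjectiveDimensionLE {n : ℕ} (h : HasGlobalDimensionLE C n)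
    (X : C) : HasProjectiveDimensionLE X n := by
  let := HasExt.standard C
  refine HasProjectiveDimensionLT.mk fun i hi Y e ↦ ?_
  have := h Y
  exact e.eq_zero_of_hasInjectiveDimensionLT (n + 1) hi

end GlobalDimension

section ModuleDimension

variable {A : Type u} [CommRing A]

theorem shortExact_subtype_mkQ {M : Type u} [AddCommGroup M] [Module A M] (N : Submodule A M) :
    (ModuleCat.shortComplexOfCompEqZero N.subtype N.mkQ
      (LinearMap.exact_subtype_mkQ N).linearMap_comp_eq_zero).ShortExact :=
  ModuleCat.shortComplex_shortExact _ (LinearMap.exact_subtype_mkQ N) N.injective_subtype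
    N.mkQ_surjective

theorem injective_of_subsingleton_ext_quotient (N : ModuleCat.{u} A)
    (h : ∀ J : Ideal A, Subsingleton (Ext (ModuleCat.of A (A ⧸ J)) N 1)) : Injective N := by
  rw [← Module.injective_iff_injective_object]
  refine Module.Baer.injective fun J g ↦ ?_
  have : Subsingleton (Ext (ModuleCat.of A (A ⧸ J)) N 1) := h J
  obtain ⟨e, he⟩ := Ext.contravariant_sequence_exact₁ (shortExact_subtype_mkQ J) N
    (Ext.mk₀ (ModuleCat.ofHom g : ModuleCat.of A J ⟶ N)) (n₁ := 1) rfl (Subsingleton.elim _ _)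
  obtain ⟨g', rfl⟩ := (Ext.mk₀_bijective _ _).2 e
  rw [Ext.mk₀_comp_mk₀, (Ext.mk₀_bijective _ _).1.eq_iff] at he
  exact ⟨g'.hom, fun x hx ↦ congrArg (fun k : ModuleCat.of A J ⟶ N ↦ k.hom ⟨x, hx⟩) he⟩

theorem hasGlobalDimensionLE_of_quotient {n : ℕ}
    (h : ∀ J : Ideal A, HasProjectiveDimensionLE (ModuleCat.of A (A ⧸ J)) n) :
    HasGlobalDimensionLE (ModuleCat.{u} A) n := fun N ↦
  hasInjectiveDimensionLE_of_subsingleton_ext _ injective_of_subsingleton_ext_quotient fun J ↦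
    have := h J
    HasProjectiveDimensionLT.subsingleton _ (n + 1) _ le_rfl N

theorem hasProjectiveDimensionLE_quotient_of_sup_span {n : ℕ} {I : Ideal A} (x : A)
    (hsup : HasProjectiveDimensionLE (ModuleCat.of A (A ⧸ I ⊔ Ideal.span {x})) n)
    (htorsion : HasProjectiveDimensionLE
      (ModuleCat.of A (A ⧸ Ideal.torsionOf A (A ⧸ I) (I.mkQ x))) n) :
    HasProjectiveDimensionLE (ModuleCat.of A (A ⧸ I)) n := by
  have hmap : Submodule.map I.mkQ (I ⊔ Ideal.span {x}) = Submodule.span A {I.mkQ x} := by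
    rw [Submodule.map_sup, Submodule.mkQ_map_self, bot_sup_eq, Ideal.span, Submodule.map_span,
      Set.image_singleton]
  have e : (A ⧸ I ⊔ Ideal.span {x}) ≃ₗ[A] (A ⧸ I) ⧸ Submodule.span A {I.mkQ x} :=
    (Submodule.quotientQuotientEquivQuotient I _ le_sup_left).symm ≪≫ₗ
      Submodule.quotEquivOfEq _ _ hmap
  exact (shortExact_subtype_mkQ (Submodule.span A {I.mkQ x})).hasProjectiveDimensionLT_X₂ _
    (hasProjectiveDimensionLT_of_iso
      (Ideal.quotTorsionOfEquivSpanSingleton A (A ⧸ I) (I.mkQ x)).toModuleIso _)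
    (hasProjectiveDimensionLT_of_iso e.toModuleIso _)

section IsLocalRing

open IsLocalRing Pointwise

variable [IsLocalRing A] [IsNoetherianRing A]

theorem hasProjectiveDimensionLE_quotient_of_isPrime {n : ℕ} {p : Ideal A} (hp : p.IsPrime)
    {x : A} (hx : x ∈ maximalIdeal A) (hxp : x ∉ p)
    (h : HasProjectiveDimensionLE (ModuleCat.of A (A ⧸ p ⊔ Ideal.span {x})) n) :
    HasProjectiveDimensionLE (ModuleCat.of A (A ⧸ p)) n := by
  have hreg : IsSMulRegular (A ⧸ p) x := .of_right_eq_zero_of_smul fun y hy ↦ by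
    rw [Algebra.smul_def] at hy
    exact (mul_eq_zero.1 hy).resolve_left (mt Ideal.Quotient.eq_zero_iff_mem.1 hxp)
  have hmap : Submodule.map p.mkQ (p ⊔ Ideal.span {x}) = x • (⊤ : Submodule A (A ⧸ p)) := by
    rw [Submodule.map_sup, Submodule.mkQ_map_self, bot_sup_eq, ← Ideal.mul_top (Ideal.span {x}),
      ← smul_eq_mul, Submodule.ideal_span_singleton_smul, Submodule.map_pointwise_smul,
      Submodule.map_top, Submodule.range_mkQ]
  have e : (A ⧸ p ⊔ Ideal.span {x}) ≃ₗ[A] QuotSMulTop x (A ⧸ p) :=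
    (Submodule.quotientQuotientEquivQuotient p _ le_sup_left).symm ≪≫ₗ
      Submodule.quotEquivOfEq _ _ hmap
  rw [← projectiveDimension_le_iff] at h ⊢
  calc projectiveDimension (ModuleCat.of A (A ⧸ p))
      ≤ projectiveDimension (ModuleCat.of A (A ⧸ p)) + 1 := le_add_of_nonneg_right zero_le_one
    _ = projectiveDimension (ModuleCat.of A (QuotSMulTop x (A ⧸ p))) :=
      (ModuleCat.projectiveDimension_quotSMulTop_eq_succ_of_isSMulRegular
        (ModuleCat.of A (A ⧸ p)) x hreg hx).symm
    _ = projectiveDimension (ModuleCat.of A (A ⧸ p ⊔ Ideal.span {x})) :=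
      (projectiveDimension_eq_of_iso e.toModuleIso).symm
    _ ≤ n := h

-- Noetherian induction on `I`: if `x y ∈ I` with `x, y ∉ I`, then `A/I` is an extension of
-- `A/(I + (x))` by `A/(I : x)`; if `I` is prime and `x ∈ m \ I`, then `pd A/I < pd A/(I + (x))`.
theorem hasProjectiveDimensionLE_quotient_of_maximalIdeal {n : ℕ}
    (h : HasProjectiveDimensionLE (ModuleCat.of A (A ⧸ maximalIdeal A)) n) (I : Ideal A) :
    HasProjectiveDimensionLE (ModuleCat.of A (A ⧸ I)) n := by
  induction I using IsNoetherian.induction with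
  | hgt I ih =>
  have sup_span {x : A} (hx : x ∉ I) := ih (I ⊔ Ideal.span {x})
    (left_lt_sup.2 fun hle ↦ hx (hle (Ideal.mem_span_singleton_self x)))
  rcases eq_or_ne I ⊤ with rfl | hI
  · have := (ModuleCat.isZero_of_subsingleton
      (ModuleCat.of A (A ⧸ (⊤ : Ideal A)))).hasProjectiveDimensionLT_zero
    exact hasProjectiveDimensionLT_of_ge _ 0 _ (Nat.zero_le _)
  by_cases hprime : Ideal.IsPrime I
  · rcases (le_maximalIdeal hI).eq_or_lt with rfl | hlt
    · exact h
    · obtain ⟨x, hx, hxI⟩ := SetLike.exists_of_lt hlt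
      exact hasProjectiveDimensionLE_quotient_of_isPrime hprime hx hxI (sup_span hxI)
  · obtain ⟨x, hx, y, hy, hxy⟩ := (Ideal.not_isPrime_iff.1 hprime).resolve_left hI
    have mem_torsionOf (a : A) : a ∈ Ideal.torsionOf A (A ⧸ I) (I.mkQ x) ↔ a * x ∈ I :=
      Submodule.Quotient.mk_eq_zero I
    refine hasProjectiveDimensionLE_quotient_of_sup_span x (sup_span hx) (ih _ ?_)
    exact SetLike.lt_iff_le_and_exists.2
      ⟨fun a ha ↦ (mem_torsionOf a).2 (Ideal.mul_mem_right x I ha), y,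
        (mem_torsionOf y).2 (mul_comm x y ▸ hxy), hy⟩

theorem projectiveDimension_quotient_maximalIdeal {rs : List A}
    (hrs : Ideal.ofList rs = maximalIdeal A) (hreg : RingTheory.Sequence.IsWeaklyRegular A rs) :
    projectiveDimension (ModuleCat.of A (A ⧸ maximalIdeal A)) = rs.length := by
  have hdim := ModuleCat.projectiveDimension_quotient_eq_add_length_of_isWeaklyRegular
    (ModuleCat.of A A) rs hreg fun r hr ↦ hrs ▸ Ideal.subset_span hr
  rw [ModuleCat.projectiveDimension_eq_zero_of_projective (ModuleCat.of A A), zero_add] at hdim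
  rw [← hdim]
  exact projectiveDimension_eq_of_iso (Submodule.quotEquivOfEq (maximalIdeal A)
    (Ideal.ofList rs • ⊤) (hrs ▸ (Ideal.mul_top _).symm)).toModuleIso

theorem hasGlobalDimensionLE_iff_ringKrullDim_le {rs : List A}
    (hrs : Ideal.ofList rs = maximalIdeal A) (hdim : rs.length = ringKrullDim A) {n : ℕ} :
    HasGlobalDimensionLE (ModuleCat.{u} A) n ↔ ringKrullDim A ≤ n := by
  obtain ⟨-, hreg⟩ := isDomain_and_isWeaklyRegular_of_ofList_eq_maximalIdeal hrs hdim.le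
  rw [← hdim, ← projectiveDimension_quotient_maximalIdeal hrs hreg, projectiveDimension_le_iff]
  exact ⟨fun h ↦ h.hasProjectiveDimensionLE _, fun h ↦ hasGlobalDimensionLE_of_quotient
    (hasProjectiveDimensionLE_quotient_of_maximalIdeal h)⟩

end IsLocalRing

section Localization

theorem HasGlobalDimensionLE.localization [IsNoetherianRing A] {n : ℕ}
    (h : HasGlobalDimensionLE (ModuleCat.{u} A) n) (S : Submonoid A) :
    HasGlobalDimensionLE (ModuleCat.{u} (Localization S)) n := fun M ↦ by
  let : Module A M := Module.compHom M (algebraMap A (Localization S))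
  have : IsScalarTower A (Localization S) M := .of_compHom A (Localization S) M
  let M' : ModuleCat.{u} A := ModuleCat.of A M
  have := h M'
  have := M'.localizedModule_hasInjectiveDimensionLE n S
  have : IsLocalizedModule S (LinearMap.id : M' →ₗ[A] M) :=
    isLocalizedModule_id S M (Localization S)
  have := M'.localizedModule_isLocalizedModule S
  let e : M'.localizedModule S ≃ₗ[A] M :=
    IsLocalizedModule.linearEquiv S (M'.localizedModuleMkLinearMap S) LinearMap.id
  exact hasInjectiveDimensionLT_of_iso
    (e.extendScalarsOfIsLocalization S (Localization S)).toModuleIso (n + 1)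

theorem hasGlobalDimensionLE_iff_forall_isPrime [IsNoetherianRing A] {n : ℕ} :
    HasGlobalDimensionLE (ModuleCat.{u} A) n ↔ ∀ (p : Ideal A) [p.IsPrime],
      HasGlobalDimensionLE (ModuleCat.{u} (Localization.AtPrime p)) n := by
  refine ⟨fun h p _ ↦ h.localization _, fun h M ↦ ?_⟩
  exact (ModuleCat.hasInjectiveDimensionLE_iff_forall_primeSpectrum n M).2 fun p ↦ h p.asIdeal _

end Localization

end ModuleDimension

section Gluing

theorem injective_kernel_of_isSplitEpi {C : Type*} [Category* C] [Preadditive C] {X Y : C}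
    (f : X ⟶ Y) [HasKernel f] [IsSplitEpi f] [Injective X] : Injective (kernel f) := by
  let r : X ⟶ kernel f := kernel.lift f (𝟙 X - f ≫ section_ f) (by simp)
  have hr : kernel.ι f ≫ r = 𝟙 _ := by
    rw [← cancel_mono (kernel.ι f)]
    simp [r]
  exact (Retract.mk (kernel.ι f) r hr).injective

/-- A family of exact localizations `L i ⊣ R i` of the abelian category `𝒬`, modelled on the
sections of quasi-coherent sheaves over the members of an affine open cover. Beyond joint
faithfulness it records what is needed to glue injective objects: the composites `R i ⋙ L j`
preserve injectives, and a locally injective object surjects, locally split, onto its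
localizations. -/
structure IsInjectiveGluing {κ : Type*} {𝒬 : Type*} [Category* 𝒬] [Abelian 𝒬] {𝒞 : κ → Type*}
    [∀ i, Category* (𝒞 i)] [∀ i, Abelian (𝒞 i)] {L : ∀ i, 𝒬 ⥤ 𝒞 i} {R : ∀ i, 𝒞 i ⥤ 𝒬}
    (adj : ∀ i, L i ⊣ R i) : Prop where
  isZero (Q : 𝒬) : (∀ i, IsZero ((L i).obj Q)) → IsZero Q
  injective_obj (i j : κ) (J : 𝒞 i) : Injective J → Injective ((L j).obj ((R i).obj J))
  isSplitEpi_map_unit (Q : 𝒬) : (∀ i, Injective ((L i).obj Q)) →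
    ∀ i j, IsSplitEpi ((L j).map ((adj i).unit.app Q))

namespace IsInjectiveGluing

variable {κ : Type*} {𝒬 : Type*} [Category* 𝒬] [Abelian 𝒬] {𝒞 : κ → Type*}
  [∀ i, Category* (𝒞 i)] [∀ i, Abelian (𝒞 i)] {L : ∀ i, 𝒬 ⥤ 𝒞 i} {R : ∀ i, 𝒞 i ⥤ 𝒬}
  {adj : ∀ i, L i ⊣ R i} [∀ i, PreservesFiniteLimits (L i)]

theorem mono (h : IsInjectiveGluing adj) {Q E : 𝒬} (f : Q ⟶ E)
    (hf : ∀ i, Mono ((L i).map f)) : Mono f := by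
  rw [Preadditive.mono_iff_isZero_kernel]
  refine h.isZero _ fun i ↦ ?_
  have := (adj i).isLeftAdjoint
  exact ((Preadditive.mono_iff_isZero_kernel _).1 (hf i)).of_iso (PreservesKernel.iso (L i) f)

theorem epi (h : IsInjectiveGluing adj) {Q E : 𝒬} (f : Q ⟶ E)
    (hf : ∀ i, Epi ((L i).map f)) : Epi f := by
  rw [Preadditive.epi_iff_isZero_cokernel]
  refine h.isZero _ fun i ↦ ?_
  have := (adj i).isLeftAdjoint
  exact ((Preadditive.epi_iff_isZero_cokernel _).1 (hf i)).of_iso (PreservesCokernel.iso (L i) f)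

variable [Finite κ]

-- Induction on the number of localizations in which `Q` is nonzero: if `L i Q ≠ 0`, then `Q` is an
-- extension of the injective `R i (L i Q)` by a locally injective object killed by `L i`.
theorem injective_of_forall_injective_obj [∀ i, (R i).Full] [∀ i, (R i).Faithful]
    (h : IsInjectiveGluing adj) (Q : 𝒬) (hQ : ∀ i, Injective ((L i).obj Q)) : Injective Q := by
  induction hn : {i | ¬ IsZero ((L i).obj Q)}.ncard using Nat.strong_induction_on
    generalizing Q with
  | _ n ih =>
  by_cases hz : ∀ i, IsZero ((L i).obj Q)
  · exact (h.isZero Q hz).injective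
  push Not at hz
  obtain ⟨i, hi⟩ := hz
  have := fun i ↦ (adj i).isLeftAdjoint
  let η : Q ⟶ (R i).obj ((L i).obj Q) := (adj i).unit.app Q
  have hη := h.isSplitEpi_map_unit Q hQ i
  have : Epi η := h.epi η fun j ↦ have := hη j; inferInstance
  have hker (j : κ) : Injective ((L j).obj (kernel η)) :=
    have := hη j
    .of_iso (PreservesKernel.iso (L j) η).symm (injective_kernel_of_isSplitEpi _)
  have hsub : {j | ¬ IsZero ((L j).obj (kernel η))} ⊂ {j | ¬ IsZero ((L j).obj Q)} := by
    refine ⟨fun j hj hjz ↦ hj (.of_mono ((L j).map (kernel.ι η)) hjz), fun hle ↦ hle hi ?_⟩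
    have : Mono ((L i).map η) := inferInstance
    exact ((Preadditive.mono_iff_isZero_kernel _).1 this).of_iso (PreservesKernel.iso (L i) η)
  have := ih _ (hn ▸ Set.ncard_lt_ncard hsub) (kernel η) hker rfl
  have := Injective.injective_of_adjoint (adj i) ((L i).obj Q)
  have hS : (ShortComplex.mk (kernel.ι η) η (kernel.condition η)).ShortExact :=
    { exact := ShortComplex.exact_kernel η }
  simp only [injective_iff_hasInjectiveDimensionLT_one] at *
  exact hS.hasInjectiveDimensionLT_X₂ 1 ‹_› ‹_›

variable [∀ i, EnoughInjectives (𝒞 i)]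

theorem exists_mono_injective (h : IsInjectiveGluing adj) (Q : 𝒬) :
    ∃ (E : 𝒬) (f : Q ⟶ E), Mono f ∧ Injective E ∧ ∀ i, Injective ((L i).obj E) := by
  let I : ∀ i, 𝒞 i := fun i ↦ Injective.under ((L i).obj Q)
  let f : Q ⟶ ∏ᶜ fun i ↦ (R i).obj (I i) :=
    Pi.lift fun i ↦ (adj i).homEquiv _ _ (Injective.ι ((L i).obj Q))
  have := fun i ↦ Injective.injective_of_adjoint (adj i) (I i)
  refine ⟨∏ᶜ fun i ↦ (R i).obj (I i), f, h.mono f fun i ↦ ?_, inferInstance, fun j ↦ ?_⟩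
  · have hf : (L i).map f ≫ (L i).map (Pi.π _ i) ≫ (adj i).counit.app (I i) =
        Injective.ι ((L i).obj Q) := by
      rw [← Functor.map_comp_assoc, Pi.lift_π]
      exact ((adj i).homEquiv_counit ..).symm.trans (Equiv.symm_apply_apply _ _)
    exact mono_of_mono_fac hf
  · have := fun i ↦ h.injective_obj i j (I i) inferInstance
    exact .of_iso (PreservesProduct.iso (L j) _).symm
      (inferInstance : Injective (∏ᶜ fun i ↦ (L j).obj ((R i).obj (I i))))

theorem enoughInjectives (h : IsInjectiveGluing adj) : EnoughInjectives 𝒬 where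
  presentation Q :=
    let ⟨E, f, _, _, _⟩ := h.exists_mono_injective Q
    ⟨⟨E, inferInstance, f, inferInstance⟩⟩

variable [∀ i, (R i).Full] [∀ i, (R i).Faithful]

theorem injective_iff (h : IsInjectiveGluing adj) (Q : 𝒬) :
    Injective Q ↔ ∀ i, Injective ((L i).obj Q) := by
  refine ⟨fun hQ i ↦ ?_, h.injective_of_forall_injective_obj Q⟩
  obtain ⟨E, f, _, _, hE⟩ := h.exists_mono_injective Q
  have := hE i
  exact ((Retract.mk f _ (Injective.comp_factorThru (𝟙 Q) f)).map (L i)).injective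

theorem hasInjectiveDimensionLE_iff (h : IsInjectiveGluing adj) {n : ℕ} {Q : 𝒬} :
    HasInjectiveDimensionLE Q n ↔ ∀ i, HasInjectiveDimensionLE ((L i).obj Q) n := by
  have := fun i ↦ (adj i).isLeftAdjoint
  induction n generalizing Q with
  | zero =>
    simpa only [HasInjectiveDimensionLE, zero_add, injective_iff_hasInjectiveDimensionLT_one]
      using h.injective_iff Q
  | succ n ih =>
    obtain ⟨E, f, _, hE, hLE⟩ := h.exists_mono_injective Q
    have hS : (ShortComplex.mk f (cokernel.π f) (cokernel.condition f)).ShortExact :=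
      { exact := ShortComplex.exact_cokernel f }
    rw [HasInjectiveDimensionLE, ← hS.hasInjectiveDimensionLT_X₃_iff n hE]
    exact ih.trans (forall_congr' fun i ↦
      (hS.map_of_exact (L i)).hasInjectiveDimensionLT_X₃_iff n (hLE i))

theorem hasGlobalDimensionLE_iff (h : IsInjectiveGluing adj) {n : ℕ} :
    HasGlobalDimensionLE 𝒬 n ↔ ∀ i, HasGlobalDimensionLE (𝒞 i) n := by
  refine ⟨fun h𝒬 i N ↦ ?_, fun h𝒞 Q ↦ h.hasInjectiveDimensionLE_iff.2 fun i ↦ h𝒞 i _⟩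
  have : HasInjectiveDimensionLE ((L i).obj ((R i).obj N)) n :=
    h.hasInjectiveDimensionLE_iff.1 (h𝒬 _) i
  let e : (L i).obj ((R i).obj N) ≅ N := asIso ((adj i).counit.app N)
  exact hasInjectiveDimensionLT_of_iso e (n + 1)

end IsInjectiveGluing
end Gluing

section Restriction

variable {X : Scheme.{u}}

theorem preservesFiniteLimits_restrictFunctor {Y : Scheme.{u}} (f : Y ⟶ X) [IsOpenImmersion f] :
    PreservesFiniteLimits (Scheme.Modules.restrictFunctor f) where
  preservesFiniteLimits K _ _ := by
    let e : Scheme.Modules.restrictFunctor f ⋙ Scheme.Modules.toPresheaf Y ≅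
        Scheme.Modules.toPresheaf X ⋙
          (Functor.whiskeringLeft _ _ Ab.{u}).obj f.opensFunctor.op := Iso.refl _
    have : PreservesFiniteLimits (Scheme.Modules.toPresheaf X) := inferInstance
    have : PreservesLimitsOfShape K
        ((Functor.whiskeringLeft _ _ Ab.{u}).obj f.opensFunctor.op) := inferInstance
    have : PreservesLimitsOfShape K (Scheme.Modules.toPresheaf X ⋙
        (Functor.whiskeringLeft _ _ Ab.{u}).obj f.opensFunctor.op) :=
      comp_preservesLimitsOfShape (Scheme.Modules.toPresheaf X)
        ((Functor.whiskeringLeft _ _ Ab.{u}).obj f.opensFunctor.op)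
    have : PreservesLimitsOfShape K
        (Scheme.Modules.restrictFunctor f ⋙ Scheme.Modules.toPresheaf Y) :=
      preservesLimitsOfShape_of_natIso e.symm
    have : ReflectsLimitsOfShape K (Scheme.Modules.toPresheaf Y) :=
      reflectsLimitsOfShape_of_reflectsIsomorphisms
    exact preservesLimitsOfShape_of_reflects_of_preserves _ (Scheme.Modules.toPresheaf Y)

theorem subsingleton_section_of_isZero {M : X.Modules} (hM : IsZero M) (U : X.Opens) :
    Subsingleton Γ(M, U) :=
  ⟨fun s t ↦ by
    have h (x : Γ(M, U)) : x = 0 :=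
      congrArg (fun φ : M ⟶ M ↦ (Scheme.Modules.Hom.app φ U).hom x) (hM.eq_zero_of_src (𝟙 M))
    rw [h s, h t]⟩

theorem isZero_of_subsingleton_section (M : X.Modules) (h : ∀ U, Subsingleton Γ(M, U)) :
    IsZero M := by
  rw [IsZero.iff_id_eq_zero]
  refine Scheme.Modules.hom_ext _ _ fun U ↦ ?_
  ext x
  exact (h U).elim _ _

theorem isZero_of_isZero_restrict (M : X.Modules) (𝒰 : X.AffineOpenCover)
    (h : ∀ i, IsZero (M.restrict (𝒰.f i))) : IsZero M := by
  refine isZero_of_subsingleton_section M fun U ↦ ⟨fun s t ↦ ?_⟩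
  refine TopCat.Presheaf.section_ext (⟨M.presheaf, M.isSheaf⟩ : TopCat.Sheaf Ab.{u} X) U s t ?_
  intro x hx
  obtain ⟨y, hy⟩ := 𝒰.covers x
  let f := 𝒰.f (𝒰.idx x)
  have hle : f ''ᵁ (f ⁻¹ᵁ U) ≤ U := f.image_preimage_le U
  have hxf : x ∈ f ''ᵁ (f ⁻¹ᵁ U) := ⟨y, by simpa [f, hy] using hx, hy⟩
  have : Subsingleton Γ(M, f ''ᵁ (f ⁻¹ᵁ U)) :=
    subsingleton_section_of_isZero (h (𝒰.idx x)) (f ⁻¹ᵁ U)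
  have germ_eq (r : Γ(M, U)) := TopCat.Presheaf.germ_res_apply M.presheaf (homOfLE hle) x hxf r
  exact (germ_eq s).symm.trans ((congrArg _ (Subsingleton.elim _ _)).trans (germ_eq t))

theorem isQuasicoherent_of_iso {M N : X.Modules} (e : M ≅ N) (hM : M.IsQuasicoherent) :
    N.IsQuasicoherent :=
  (SheafOfModules.isQuasicoherent X.ringCatSheaf).prop_of_iso e hM

/-- Transport of a presentation along an isomorphism of sheaves of modules on a scheme. -/
noncomputable def presentationOfIso {M N : X.Modules} (e : M ≅ N) (P : M.Presentation) :
    N.Presentation :=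
  have : IsIso (C := SheafOfModules.{u} X.ringCatSheaf) e.hom := ⟨e.inv, e.hom_inv_id, e.inv_hom_id⟩
  SheafOfModules.Presentation.ofIsIso.{u, u, u} (M := M) (N := N) e.hom P

theorem nonempty_presentation {A : CommRingCat.{u}} (M : (Spec A).Modules) [M.IsQuasicoherent] :
    Nonempty M.Presentation :=
  have : IsIso M.fromTildeΓ := Scheme.Modules.isIso_fromTildeΓ_of_isQuasicoherent M
  ⟨presentationOfIso (asIso M.fromTildeΓ)
    (presentationTilde.{u} _ .univ (by simp) _ (Submodule.span_eq _))⟩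

theorem nonempty_presentation_over {M : X.Modules} {U : X.Opens}
    (P : (M.restrict U.ι).Presentation) : Nonempty (SheafOfModules.over M U).Presentation := by
  let e : SheafOfModules.{u} (X.ringCatSheaf.over U) ≌
    SheafOfModules.{u} (U : Scheme.{u}).ringCatSheaf := Scheme.Modules.overEquiv U
  let eUnit : SheafOfModules.unit (X.ringCatSheaf.over U) ≅
      e.inverse.obj (.unit (U : Scheme.{u}).ringCatSheaf) :=
    e.unitIso.app _ ≪≫ e.inverse.mapIso
      ((Scheme.Modules.overFunctorEquiv U).app (.unit X.ringCatSheaf) ≪≫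
        Scheme.Modules.restrictUnitIso U.ι)
  let eM : e.inverse.obj (M.restrict U.ι) ≅ SheafOfModules.over M U :=
    e.inverse.mapIso ((Scheme.Modules.overFunctorEquiv U).app M).symm ≪≫ (e.unitIso.app _).symm
  have : PreservesColimitsOfSize.{u, u} e.inverse :=
    e.symm.toAdjunction.leftAdjoint_preservesColimits
  exact ⟨.ofIsIso.{u} eM.hom (P.map e.inverse eUnit)⟩

theorem isQuasicoherent_of_isQuasicoherent_restrict (M : X.Modules) (𝒰 : X.AffineOpenCover)
    (h : ∀ i, (M.restrict (𝒰.f i)).IsQuasicoherent) : M.IsQuasicoherent := by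
  have presentation (x : X) :
      Nonempty (SheafOfModules.over M (𝒰.f (𝒰.idx x)).opensRange).Presentation := by
    let f := 𝒰.f (𝒰.idx x)
    let j := f.isoOpensRange
    have := h (𝒰.idx x)
    obtain ⟨P⟩ := nonempty_presentation (M.restrict f)
    have e : f.opensRange.ι = j.inv ≫ f := by simp [j]
    exact nonempty_presentation_over (((Scheme.Modules.restrictFunctorCongr e ≪≫
      Scheme.Modules.restrictFunctorComp _ _).app M).symm |>
        (presentationOfIso · (Scheme.Modules.presentationRestrict j.inv P)))
  have q : SheafOfModules.QuasicoherentData.{u, u, u, u} M :=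
    { I := X
      X x := (𝒰.f (𝒰.idx x)).opensRange
      coversTop := (Opens.coversTop_iff _ _).2 <| .mk <| by
        ext x
        simpa using ⟨x, 𝒰.covers x⟩
      presentation x := (presentation x).some }
  exact q.isQuasicoherent

end Restriction

section Tilde

theorem subsingleton_stalk_tilde {A : CommRingCat.{u}} {J : ModuleCat.{u} A} {a : A}
    (hJ : Submodule.torsion' A J (Submonoid.powers a) = ⊤) (x : PrimeSpectrum.Top A)
    (ha : a ∉ x.asIdeal) : Subsingleton ((tilde J).presheaf.stalk x) := by
  refine subsingleton_of_forall_eq 0 fun z ↦ ?_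
  have : x.asIdeal.IsPrime := x.isPrime
  obtain ⟨⟨j, s⟩, rfl⟩ := IsLocalizedModule.mk'_surjective x.asIdeal.primeCompl
    (tilde.toStalk J x).hom z
  obtain ⟨⟨c, hc⟩, hcj⟩ :=
    (Submodule.mem_torsion'_iff (Submonoid.powers a) j).1 (hJ ▸ Submodule.mem_top)
  rw [Function.uncurry_apply_pair, IsLocalizedModule.mk'_eq_zero']
  exact ⟨⟨c, (Submonoid.powers_le (P := x.asIdeal.primeCompl)).2 ha hc⟩, hcj⟩

theorem subsingleton_section_tilde {A : CommRingCat.{u}} {J : ModuleCat.{u} A} {V : (Spec A).Opens}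
    (h : ∀ x ∈ V, ∃ a ∉ PrimeSpectrum.asIdeal x,
      Submodule.torsion' A J (Submonoid.powers a) = ⊤) : Subsingleton Γ(tilde J, V) := by
  refine ⟨fun s t ↦ TopCat.Presheaf.section_ext
    (⟨(tilde J).presheaf, (tilde J).isSheaf⟩ : TopCat.Sheaf Ab.{u} (Spec A)) V s t fun x hx ↦ ?_⟩
  obtain ⟨a, ha, hJ⟩ := h x hx
  exact (subsingleton_stalk_tilde hJ x ha).elim _ _

theorem exists_finset_forall_mem_iff {A : CommRingCat.{u}} [IsNoetherianRing A]
    (W : (Spec A).Opens) :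
    ∃ t : Finset A, ∀ x, x ∈ W ↔ ∃ a ∈ t, a ∉ PrimeSpectrum.asIdeal x := by
  obtain ⟨t, ht⟩ := PrimeSpectrum.isCompact_isOpen_iff.1
    ⟨TopologicalSpace.NoetherianSpace.isCompact (α := PrimeSpectrum A) W.1, W.2⟩
  refine ⟨t, fun x ↦ (Set.ext_iff.1 ht x).symm.trans ?_⟩
  exact Set.not_subset

/-- The open immersion of schemes `D(a) ⟶ Spec A`, with `D(a)` presented as `Spec A[1/a]`. -/
noncomputable abbrev basicOpenInclusion {A : CommRingCat.{u}} (a : A) :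
    Spec (CommRingCat.of (Localization.Away a)) ⟶ Spec A :=
  Spec.map (CommRingCat.ofHom (algebraMap A (Localization.Away a)))

theorem notMem_asIdeal_basicOpenInclusion {A : CommRingCat.{u}} (a : A)
    (y : Spec (CommRingCat.of (Localization.Away a))) :
    a ∉ PrimeSpectrum.asIdeal (basicOpenInclusion a y) := by
  have h : basicOpenInclusion a y ∈
    Set.range (PrimeSpectrum.comap (algebraMap A (Localization.Away a))) := ⟨y, rfl⟩
  rwa [PrimeSpectrum.localization_away_comap_range (Localization.Away a) a] at h

theorem nonempty_pushforward_tilde_iso {A B : CommRingCat.{u}} (φ : A ⟶ B)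
    (N : ModuleCat.{u} B) :
    Nonempty ((Scheme.Modules.pushforward (Spec.map φ)).obj (tilde N) ≅
      tilde ((ModuleCat.restrictScalars φ.hom).obj N)) := by
  let M := (Scheme.Modules.pushforward (Spec.map φ)).obj (tilde N)
  have : IsIso (tilde N).fromTildeΓ := Scheme.Modules.isIso_fromTildeΓ_of_isQuasicoherent _
  have : IsIso M.fromTildeΓ := isIso_fromTildeΓ_pushforward φ (tilde N)
  let e : moduleSpecΓFunctor.obj M ≅
      (ModuleCat.restrictScalars φ.hom).obj (moduleSpecΓFunctor.obj (tilde N)) :=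
    (TopCat.Sheaf.forget _ _ ⋙ (evaluation _ _).obj (.op ⊤)).mapIso
      ((pushforwardCompModulesSpecToSheafIso φ).app (tilde N))
  exact ⟨(asIso M.fromTildeΓ).symm ≪≫ (tilde.functor A).mapIso
    (e ≪≫ (ModuleCat.restrictScalars φ.hom).mapIso (tilde.isoTop N).symm)⟩

theorem injective_restrictScalars {A B : Type u} [CommRing A] [CommRing B] {φ : A →+* B}
    (h : φ.Flat) (N : ModuleCat.{u} B) [Injective N] :
    Injective ((ModuleCat.restrictScalars φ).obj N) :=
  have := ModuleCat.preservesFiniteLimits_extendScalars_of_flat h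
  Injective.injective_of_adjoint (ModuleCat.extendRestrictScalarsAdj φ) N

theorem exists_injective_restrictScalars_iso {A : Type u} [CommRing A] [IsNoetherianRing A]
    (J : ModuleCat.{u} A) [Injective J] (a : A) (ha : Function.Bijective fun x : J ↦ a • x) :
    ∃ N : ModuleCat.{u} (Localization.Away a), Injective N ∧
      Nonempty (J ≅ (ModuleCat.restrictScalars (algebraMap A (Localization.Away a))).obj N) := by
  let S := Submonoid.powers a
  let ℓ := LocalizedModule.mkLinearMap S J
  have isUnit (s : S) : IsUnit (algebraMap A (Module.End A J) s) := by
    obtain ⟨_, n, rfl⟩ := s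
    simpa only [map_pow] using ((Module.End.isUnit_iff _).2 ha).pow n
  have : IsLocalizedModule S (LinearMap.id : J →ₗ[A] J) :=
    ⟨isUnit, fun y ↦ ⟨(y, 1), by simp⟩, fun {x y} h ↦ ⟨1, by simpa using h⟩⟩
  let e : J ≃ₗ[A] LocalizedModule S J := IsLocalizedModule.linearEquiv S LinearMap.id ℓ
  have : Module.Injective A J := (Module.injective_iff_injective_object A J).2 ‹_›
  have : Module.Injective (Localization.Away a) (LocalizedModule S J) :=
    Module.injective_of_isLocalizedModule S ℓ
  let N := ModuleCat.of (Localization.Away a) (LocalizedModule S J)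
  let e' : J ≃ₗ[A] (ModuleCat.restrictScalars (algebraMap A (Localization.Away a))).obj N :=
    { (e.toAddEquiv : J ≃+ N) with
      map_smul' r x := (e.map_smul r x).trans (algebraMap_smul (Localization.Away a) r (e x)).symm }
  exact ⟨N, (Module.injective_iff_injective_object _ _).1 ‹_›, ⟨e'.toModuleIso⟩⟩

theorem exists_injective_pushforward_basicOpenInclusion_iso {A : CommRingCat.{u}}
    [IsNoetherianRing A] (J : ModuleCat.{u} A) [Injective J] (a : A)
    (ha : Function.Bijective fun x : J ↦ a • x) :
    ∃ N : ModuleCat.{u} (Localization.Away a), Injective N ∧ Nonempty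
      (tilde J ≅ (Scheme.Modules.pushforward (basicOpenInclusion a)).obj (tilde N)) := by
  obtain ⟨N, hN, ⟨e⟩⟩ := exists_injective_restrictScalars_iso J a ha
  obtain ⟨e'⟩ := nonempty_pushforward_tilde_iso
    (CommRingCat.ofHom (algebraMap A (Localization.Away a))) N
  exact ⟨N, hN, ⟨(tilde.functor A).mapIso e ≪≫ e'.symm⟩⟩

end Tilde

section Pushforward

/-- The sheaves of modules on an affine scheme isomorphic to `tilde J` for an injective
module `J`. -/
abbrev isTildeOfInjective (A : CommRingCat.{u}) : ObjectProperty (Spec A).Modules :=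
  (isInjective (ModuleCat.{u} A)).map (tilde.functor A)

theorem isTildeOfInjective_biprod {A : CommRingCat.{u}} {M N : (Spec A).Modules}
    (hM : isTildeOfInjective A M) (hN : isTildeOfInjective A N) :
    isTildeOfInjective A (M ⊞ N) := by
  obtain ⟨J, hJ, ⟨e⟩⟩ := hM
  obtain ⟨K, hK, ⟨e'⟩⟩ := hN
  have := preservesBinaryBiproducts_of_preservesBiproducts (tilde.functor A)
  have : Injective J := hJ
  have : Injective K := hK
  exact ⟨J ⊞ K, inferInstance, ⟨(tilde.functor A).mapBiprod J K ≪≫ biprod.mapIso e e'⟩⟩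

theorem isTildeOfInjective_of_isZero {A : CommRingCat.{u}} {M : (Spec A).Modules}
    (hM : IsZero M) : isTildeOfInjective A M :=
  ⟨.of A PUnit, (ModuleCat.isZero_of_subsingleton _).injective,
    ⟨((tilde.functor A).map_isZero (ModuleCat.isZero_of_subsingleton _)).iso hM⟩⟩

variable {X : Scheme.{u}}

theorem isTildeOfInjective_restrict_pushforward_of_range_le {B C : CommRingCat.{u}}
    (p : Spec C ⟶ X) (g : Spec B ⟶ X) [IsOpenImmersion p] [IsOpenImmersion g]
    (hpg : Set.range p ⊆ Set.range g) (N : ModuleCat.{u} C) [Injective N] :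
    isTildeOfInjective B (((Scheme.Modules.pushforward p).obj (tilde N)).restrict g) := by
  let q := IsOpenImmersion.lift g p hpg
  have hq : q ≫ g = p := IsOpenImmersion.lift_fac g p hpg
  have : IsOpenImmersion (q ≫ g) := by rwa [hq]
  have : IsOpenImmersion q := IsOpenImmersion.of_comp q g
  obtain ⟨ψ, hψ⟩ := Spec.map_surjective q
  have flat : ψ.hom.Flat := by
    rw [← Flat.SpecMap_iff, hψ]
    infer_instance
  obtain ⟨e⟩ := nonempty_pushforward_tilde_iso ψ N
  exact ⟨_, injective_restrictScalars flat N, ⟨e.symm ≪≫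
    (Scheme.Modules.pushforwardCongr hψ).app (tilde N) ≪≫
    ((Scheme.Modules.restrictFunctorAdjCounitIso g).app _).symm ≪≫
    (Scheme.Modules.restrictFunctor g).mapIso
      ((Scheme.Modules.pushforwardComp q g ≪≫ Scheme.Modules.pushforwardCongr hq).app (tilde N))⟩⟩

theorem additive_restrictFunctor {Y : Scheme.{u}} (f : Y ⟶ X) [IsOpenImmersion f] :
    (Scheme.Modules.restrictFunctor f).Additive :=
  have := preservesFiniteLimits_restrictFunctor f
  Functor.additive_of_preserves_binary_products _

theorem isTildeOfInjective_restrict_pushforward {A B : CommRingCat.{u}} [IsNoetherianRing A]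
    (f : Spec A ⟶ X) (g : Spec B ⟶ X) [IsOpenImmersion f] [IsOpenImmersion g]
    (J : ModuleCat.{u} A) (hJ : Injective J) :
    isTildeOfInjective B (((Scheme.Modules.pushforward f).obj (tilde J)).restrict g) := by
  let F : ModuleCat.{u} A ⥤ (Spec B).Modules :=
    tilde.functor A ⋙ Scheme.Modules.pushforward f ⋙ Scheme.Modules.restrictFunctor g
  have := additive_restrictFunctor g
  have : PreservesBinaryBiproducts F := preservesBinaryBiproducts_of_preservesBiproducts F
  obtain ⟨t, ht⟩ := exists_finset_forall_mem_iff (f ⁻¹ᵁ g.opensRange)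
  refine injective_induction ((isTildeOfInjective B).inverseImage F) ?biprod t ?torsion ?bijective
    J hJ
  case biprod =>
    exact fun M N hM hN ↦ (isTildeOfInjective B).prop_of_iso (F.mapBiprod M N).symm
      (isTildeOfInjective_biprod hM hN)
  case torsion =>
    intro J _ hJ
    refine isTildeOfInjective_of_isZero (isZero_of_subsingleton_section _ fun U ↦ ?_)
    refine subsingleton_section_tilde (V := f ⁻¹ᵁ (g ''ᵁ U)) fun x ⟨y, _, hy⟩ ↦ ?_
    obtain ⟨a, ha, hax⟩ := (ht x).1 ⟨y, hy⟩
    exact ⟨a, hax, hJ a ha⟩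
  case bijective =>
    intro J _ a ha hbij
    obtain ⟨N, _, ⟨e⟩⟩ := exists_injective_pushforward_basicOpenInclusion_iso J a hbij
    refine (isTildeOfInjective B).prop_of_iso ((Scheme.Modules.restrictFunctor g).mapIso
      ((Scheme.Modules.pushforward f).mapIso e ≪≫
        (Scheme.Modules.pushforwardComp (basicOpenInclusion a) f).app (tilde N)).symm)
      (isTildeOfInjective_restrict_pushforward_of_range_le (basicOpenInclusion a ≫ f) g ?_ N)
    rintro _ ⟨y, rfl⟩
    simpa using (ht _).2 ⟨a, ha, notMem_asIdeal_basicOpenInclusion a y⟩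

theorem isQuasicoherent_pushforward_tilde_of_injective {A : CommRingCat.{u}} [IsNoetherianRing A]
    (f : Spec A ⟶ X) [IsOpenImmersion f] (J : ModuleCat.{u} A) [Injective J] :
    ((Scheme.Modules.pushforward f).obj (tilde J)).IsQuasicoherent := by
  refine isQuasicoherent_of_isQuasicoherent_restrict _ X.affineOpenCover fun i ↦ ?_
  obtain ⟨K, _, ⟨e⟩⟩ :=
    isTildeOfInjective_restrict_pushforward f (X.affineOpenCover.f i) J inferInstance
  exact isQuasicoherent_of_iso e (inferInstance : (tilde K).IsQuasicoherent)

theorem isQuasicoherent_pushforward_tilde {A : CommRingCat.{u}} [IsNoetherianRing A]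
    (f : Spec A ⟶ X) [IsOpenImmersion f]
    (hker : ∀ {M N : X.Modules} (φ : M ⟶ N), M.IsQuasicoherent → N.IsQuasicoherent →
      (kernel φ).IsQuasicoherent) (N : ModuleCat.{u} A) :
    ((Scheme.Modules.pushforward f).obj (tilde N)).IsQuasicoherent := by
  let d := (tilde.functor A).map (Injective.d (Injective.ι N))
  let F := Scheme.Modules.pushforward f
  have : F.IsRightAdjoint := (Scheme.Modules.restrictAdjunction f).isRightAdjoint
  have hpush : (F.obj (kernel d)).IsQuasicoherent := by
    refine isQuasicoherent_of_iso (PreservesKernel.iso F d).symm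
      (hker _ ?_ ?_) <;>
    exact isQuasicoherent_pushforward_tilde_of_injective f _
  have := preservesFiniteLimits_restrictFunctor f
  have hK : (kernel d).IsQuasicoherent :=
    isQuasicoherent_of_iso ((Scheme.Modules.restrictFunctorAdjCounitIso f).app (kernel d))
      (Scheme.Modules.isQuasicoherent_restrictFunctor f _)
  have : IsIso (kernel d).fromTildeΓ := Scheme.Modules.isIso_fromTildeΓ_of_isQuasicoherent _
  have : (moduleSpecΓFunctor (R := A)).IsRightAdjoint := tilde.adjunction.isRightAdjoint
  let e : N ≅ moduleSpecΓFunctor.obj (kernel d) :=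
    (CategoryTheory.exact_f_d (Injective.ι N)).fIsKernel.conePointUniqueUpToIso (limit.isLimit _) ≪≫
      kernel.mapIso _ _ (tilde.isoTop _) (tilde.isoTop _)
        (tilde.toTildeΓNatIso.hom.naturality (Injective.d (Injective.ι N))) ≪≫
      (PreservesKernel.iso moduleSpecΓFunctor d).symm
  exact isQuasicoherent_of_iso (F.mapIso (asIso (kernel d).fromTildeΓ).symm ≪≫
    F.mapIso ((tilde.functor A).mapIso e.symm)) hpush

end Pushforward

section RestrictSections

theorem isSplitEpi_app_of_iso {C D : Type*} [Category* C] [Category* D] {F G : C ⥤ D} (τ : F ⟶ G)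
    {M N : C} (e : M ≅ N) (h : IsSplitEpi (τ.app M)) : IsSplitEpi (τ.app N) :=
  ⟨⟨⟨G.map e.inv ≫ section_ (τ.app M) ≫ F.map e.hom, by simp [← Functor.map_comp]⟩⟩⟩

theorem isSplitEpi_app_biprod {C D : Type*} [Category* C] [Category* D] [Preadditive C]
    [Preadditive D] {F G : C ⥤ D} [G.Additive] (τ : F ⟶ G) (M N : C) [HasBinaryBiproduct M N]
    (hM : IsSplitEpi (τ.app M)) (hN : IsSplitEpi (τ.app N)) : IsSplitEpi (τ.app (M ⊞ N)) :=
  ⟨⟨⟨G.map biprod.fst ≫ section_ (τ.app M) ≫ F.map biprod.inl +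
    G.map biprod.snd ≫ section_ (τ.app N) ≫ F.map biprod.inr, by
      simp [← Functor.map_comp, ← Functor.map_add]⟩⟩⟩

theorem bijective_presheaf_map_of_le {X : Scheme.{u}} (M : X.Modules) {U V : X.Opens}
    (hUV : U ≤ V) (hVU : V ≤ U) : Function.Bijective (M.presheaf.map (homOfLE hUV).op) :=
  have := isIso_homOfLE (hUV.antisymm hVU)
  ConcreteCategory.bijective_of_isIso _

variable {B : CommRingCat.{u}}

/-- The functor of sections over the open `U` of `Spec B`, with values in `B`-modules; for `U = ⊤`
this is `moduleSpecΓFunctor` by definition. -/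
noncomputable def sectionsFunctor (U : (Spec B).Opens) : (Spec B).Modules ⥤ ModuleCat.{u} B :=
  modulesSpecToSheaf ⋙ TopCat.Sheaf.forget _ _ ⋙ (evaluation _ _).obj (.op U)

/-- Restriction of global sections to the open `U` of `Spec B`. -/
noncomputable def restrictSections (U : (Spec B).Opens) :
    moduleSpecΓFunctor (R := B) ⟶ sectionsFunctor U :=
  Functor.whiskerLeft modulesSpecToSheaf (Functor.whiskerLeft (TopCat.Sheaf.forget _ _)
    ((evaluation _ _).map (homOfLE le_top : U ⟶ ⊤).op))

instance additive_sectionsFunctor (U : (Spec B).Opens) : (sectionsFunctor U).Additive := ⟨rfl⟩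

theorem isSplitEpi_restrictSections_app [IsNoetherianRing B] (U : (Spec B).Opens)
    {M : (Spec B).Modules} (hM : isTildeOfInjective B M) :
    IsSplitEpi ((restrictSections U).app M) := by
  obtain ⟨J, hJ, ⟨e⟩⟩ := hM
  refine isSplitEpi_app_of_iso _ e ?_
  obtain ⟨t, ht⟩ := exists_finset_forall_mem_iff U
  let τ := Functor.whiskerLeft (tilde.functor B) (restrictSections U)
  let P : ObjectProperty (ModuleCat.{u} B) := fun J ↦ IsSplitEpi (τ.app J)
  have : P.IsClosedUnderIsomorphisms := ⟨isSplitEpi_app_of_iso τ⟩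
  refine injective_induction P (fun M N ↦ isSplitEpi_app_biprod τ M N) t ?torsion ?bijective J hJ
  case torsion =>
    intro J _ hJ
    have : Subsingleton ((sectionsFunctor U).obj (tilde J)) :=
      subsingleton_section_tilde fun x hx ↦
        let ⟨a, ha, hax⟩ := (ht x).1 hx
        ⟨a, hax, hJ a ha⟩
    have hzero := ModuleCat.isZero_of_subsingleton ((sectionsFunctor U).obj (tilde J))
    exact ⟨⟨⟨0, hzero.eq_of_src _ _⟩⟩⟩
  case bijective =>
    intro J _ a ha hbij
    obtain ⟨N, _, ⟨e⟩⟩ := exists_injective_pushforward_basicOpenInclusion_iso J a hbij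
    refine isSplitEpi_app_of_iso (restrictSections U) e.symm ?_
    have hbij := bijective_presheaf_map_of_le (tilde N) (U := basicOpenInclusion a ⁻¹ᵁ U) le_top
      fun y _ ↦ (ht _).2 ⟨a, ha, notMem_asIdeal_basicOpenInclusion a y⟩
    have : IsIso ((restrictSections U).app
        ((Scheme.Modules.pushforward (basicOpenInclusion a)).obj (tilde N))) :=
      (ConcreteCategory.isIso_iff_bijective _).2 hbij
    infer_instance

-- Put `W = g⁻¹(f(Spec A))`. By naturality of restriction from `⊤` to `W`, the map in question
-- followed by an isomorphism is restriction of sections of `M.restrict g` to `W` followed by an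
-- isomorphism.
theorem isSplitEpi_map_restrictAdjunction_unit {X : Scheme.{u}} {A : CommRingCat.{u}}
    [IsNoetherianRing B] (f : Spec A ⟶ X) (g : Spec B ⟶ X) [IsOpenImmersion f] [IsOpenImmersion g]
    {M : X.Modules} (hM : isTildeOfInjective B (M.restrict g)) :
    IsSplitEpi (moduleSpecΓFunctor.map ((Scheme.Modules.restrictFunctor g).map
      ((Scheme.Modules.restrictAdjunction f).unit.app M))) := by
  let W : (Spec B).Opens := g ⁻¹ᵁ f.opensRange
  let u := (Scheme.Modules.restrictFunctor g).map
    ((Scheme.Modules.restrictAdjunction f).unit.app M)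
  have hW : g ''ᵁ W ≤ f ''ᵁ f ⁻¹ᵁ g ''ᵁ W := by
    rw [f.image_preimage_eq_opensRange_inf]
    exact le_inf (g.image_preimage_le _) le_rfl
  have hW' : f ⁻¹ᵁ g ''ᵁ ⊤ ≤ f ⁻¹ᵁ g ''ᵁ W := by
    rintro x ⟨y, -, hy⟩
    exact ⟨y, ⟨x, hy.symm⟩, hy⟩
  have hu := bijective_presheaf_map_of_le M (f.image_preimage_le (g ''ᵁ W)) hW
  have hres := bijective_presheaf_map_of_le (M.restrict f)
    (f.preimage_mono (g.image_mono le_top)) hW'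
  have : IsIso ((sectionsFunctor W).map u) := (ConcreteCategory.isIso_iff_bijective _).2 hu
  have : IsIso ((restrictSections W).app (((Scheme.Modules.restrictFunctor f ⋙
      Scheme.Modules.pushforward f).obj M).restrict g)) :=
    (ConcreteCategory.isIso_iff_bijective _).2 hres
  have : IsSplitEpi ((restrictSections W).app (((𝟭 X.Modules).obj M).restrict g)) :=
    isSplitEpi_restrictSections_app W hM
  have hnat := (restrictSections W).naturality u
  rw [← IsIso.eq_comp_inv] at hnat
  exact hnat ▸ inferInstance

end RestrictSections

section LocalSections

variable {X : Scheme.{u}} {𝒬 : Type u₁} [Category.{v₁} 𝒬] (ι : 𝒬 ⥤ X.Modules)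

theorem isQuasicoherent_kernel [Abelian 𝒬] [ι.Full] [PreservesFiniteLimits ι]
    (hima : ∀ Q : 𝒬, (ι.obj Q).IsQuasicoherent)
    (himb : ∀ M : X.Modules, M.IsQuasicoherent → ∃ Q : 𝒬, Nonempty (ι.obj Q ≅ M))
    {M N : X.Modules} (φ : M ⟶ N) (hM : M.IsQuasicoherent) (hN : N.IsQuasicoherent) :
    (kernel φ).IsQuasicoherent := by
  obtain ⟨P, ⟨e⟩⟩ := himb M hM
  obtain ⟨Q, ⟨e'⟩⟩ := himb N hN
  let ψ : P ⟶ Q := ι.preimage (e.hom ≫ φ ≫ e'.inv)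
  have := Functor.additive_of_preserves_binary_products ι
  exact isQuasicoherent_of_iso
    (PreservesKernel.iso ι ψ ≪≫ kernel.mapIso _ _ e e' (by simp [ψ])) (hima (kernel ψ))

variable {A : CommRingCat.{u}} (f : Spec A ⟶ X) [IsOpenImmersion f]

/-- Sections over the affine open `f : Spec A ⟶ X` of the sheaf underlying an object of `𝒬`. -/
noncomputable abbrev localSections : 𝒬 ⥤ ModuleCat.{u} A :=
  ι ⋙ Scheme.Modules.restrictFunctor f ⋙ moduleSpecΓFunctor

/-- The quasi-coherent sheaf attached to an `A`-module, extended along `f : Spec A ⟶ X` and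
lifted to `𝒬`. -/
noncomputable abbrev extendTilde [ι.Full] [ι.Faithful]
    (hpush : ∀ N, ι.essImage ((tilde.functor A ⋙ Scheme.Modules.pushforward f).obj N)) :
    ModuleCat.{u} A ⥤ 𝒬 :=
  Functor.essImage.liftFunctor (tilde.functor A ⋙ Scheme.Modules.pushforward f) ι hpush

variable {ι f}

theorem isIso_fromTildeΓ_restrict {M : X.Modules} (_ : M.IsQuasicoherent) :
    IsIso (M.restrict f).fromTildeΓ :=
  have := Scheme.Modules.isQuasicoherent_restrictFunctor f M
  Scheme.Modules.isIso_fromTildeΓ_of_isQuasicoherent _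

/-- The restriction to `Spec A` of an object of `𝒬` is the sheaf attached to its sections. -/
noncomputable def restrictIsoTildeLocalSections (hima : ∀ Q : 𝒬, (ι.obj Q).IsQuasicoherent) :
    ι ⋙ Scheme.Modules.restrictFunctor f ≅ localSections ι f ⋙ tilde.functor A :=
  have (Q : 𝒬) : IsIso ((Functor.whiskerLeft (ι ⋙ Scheme.Modules.restrictFunctor f)
      Scheme.Modules.fromTildeΓNatTrans).app Q) := isIso_fromTildeΓ_restrict (hima Q)
  have := NatIso.isIso_of_isIso_app (Functor.whiskerLeft (ι ⋙ Scheme.Modules.restrictFunctor f)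
    Scheme.Modules.fromTildeΓNatTrans)
  (asIso (Functor.whiskerLeft (ι ⋙ Scheme.Modules.restrictFunctor f)
    Scheme.Modules.fromTildeΓNatTrans)).symm

theorem preservesFiniteLimits_localSections [PreservesFiniteLimits ι] :
    PreservesFiniteLimits (localSections ι f) :=
  have := preservesFiniteLimits_restrictFunctor f
  have : (moduleSpecΓFunctor (R := A)).IsRightAdjoint := tilde.adjunction.isRightAdjoint
  comp_preservesFiniteLimits _ _

variable [ι.Full] [ι.Faithful]
  (hpush : ∀ N, ι.essImage ((tilde.functor A ⋙ Scheme.Modules.pushforward f).obj N))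

/-- Taking sections over `Spec A` is left adjoint to extending along `f`, the restriction to `𝒬` of
the adjunction between restriction and pushforward. -/
noncomputable def localSectionsAdjunction (hima : ∀ Q : 𝒬, (ι.obj Q).IsQuasicoherent) :
    localSections ι f ⊣ extendTilde ι f hpush :=
  (Scheme.Modules.restrictAdjunction f).restrictFullyFaithful (.ofFullyFaithful ι)
    tilde.fullyFaithfulFunctor (restrictIsoTildeLocalSections hima)
    (Functor.essImage.liftFunctorCompIso _ ι hpush).symm

instance full_extendTilde : (extendTilde ι f hpush).Full :=
  .of_comp_faithful_iso (Functor.essImage.liftFunctorCompIso _ ι hpush)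

instance faithful_extendTilde : (extendTilde ι f hpush).Faithful :=
  .of_comp_iso (Functor.essImage.liftFunctorCompIso _ ι hpush)

theorem injective_localSections_extendTilde [IsNoetherianRing A] {B : CommRingCat.{u}}
    (g : Spec B ⟶ X) [IsOpenImmersion g] (J : ModuleCat.{u} A) (hJ : Injective J) :
    Injective ((localSections ι g).obj ((extendTilde ι f hpush).obj J)) := by
  obtain ⟨K, hK, ⟨e⟩⟩ := isTildeOfInjective_restrict_pushforward f g J hJ
  let e' := (Functor.essImage.liftFunctorCompIso _ ι hpush).app J
  exact .of_iso (tilde.isoTop K ≪≫ moduleSpecΓFunctor.mapIso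
    (e ≪≫ ((Scheme.Modules.restrictFunctor g).mapIso e').symm)) hK

theorem isSplitEpi_localSections_map_unit {B : CommRingCat.{u}} [IsNoetherianRing B]
    (hima : ∀ Q : 𝒬, (ι.obj Q).IsQuasicoherent) (g : Spec B ⟶ X) [IsOpenImmersion g] (Q : 𝒬)
    (hQ : Injective ((localSections ι g).obj Q)) :
    IsSplitEpi ((localSections ι g).map ((localSectionsAdjunction hpush hima).unit.app Q)) := by
  have := isSplitEpi_map_restrictAdjunction_unit f g (M := ι.obj Q)
    ⟨_, hQ, ⟨((restrictIsoTildeLocalSections hima).app Q).symm⟩⟩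
  simp only [localSections, Functor.comp_map, localSectionsAdjunction,
    Adjunction.map_restrictFullyFaithful_unit_app, Functor.map_comp]
  infer_instance

variable [Abelian 𝒬]

theorem isInjectiveGluing_localSectionsAdjunction (𝒰 : X.AffineOpenCover)
    [∀ i, IsNoetherianRing (𝒰.X i)] (hima : ∀ Q : 𝒬, (ι.obj Q).IsQuasicoherent)
    (hpush : ∀ i N, ι.essImage ((tilde.functor (𝒰.X i) ⋙
      Scheme.Modules.pushforward (𝒰.f i)).obj N)) :
    IsInjectiveGluing fun i ↦ localSectionsAdjunction (hpush i) hima where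
  isZero Q hQ := by
    have hzero : IsZero (ι.obj Q) := isZero_of_isZero_restrict _ 𝒰 fun i ↦
      ((tilde.functor (𝒰.X i)).map_isZero (hQ i)).of_iso
        ((restrictIsoTildeLocalSections hima).app Q)
    exact (IsZero.iff_id_eq_zero Q).2 (ι.map_injective (hzero.eq_of_src _ _))
  injective_obj i j J hJ := injective_localSections_extendTilde (hpush i) (𝒰.f j) J hJ
  isSplitEpi_map_unit Q hQ i j :=
    isSplitEpi_localSections_map_unit (hpush i) hima (𝒰.f j) Q (hQ j)

end LocalSections

section Schemes

theorem topologicalKrullDim_le_iff_forall_ringKrullDim_stalk_le (X : Scheme.{u}) {n : ℕ} :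
    topologicalKrullDim X ≤ n ↔ ∀ x : X, ringKrullDim (X.presheaf.stalk x) ≤ n := by
  have h : topologicalKrullDim X = Order.krullDim X :=
    Order.krullDim_eq_of_orderIso (irreducibleSetEquivPoints (α := X))
  simp only [h, Order.krullDim_eq_iSup_coheight, iSup_le_iff, ringKrullDim_stalk_eq_coheight]

theorem nonempty_stalk_ringEquiv_localization {X : Scheme.{u}} {A : CommRingCat.{u}}
    (f : Spec A ⟶ X) [IsOpenImmersion f] (y : PrimeSpectrum A) :
    Nonempty (X.presheaf.stalk (f y) ≃+* Localization.AtPrime y.asIdeal) := by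
  let x : Spec A := y
  let _ : Algebra A ((Spec A).presheaf.stalk x) := StructureSheaf.stalkAlgebra A x
  have : IsLocalization.AtPrime ((Spec A).presheaf.stalk x) y.asIdeal :=
    StructureSheaf.IsLocalization.to_stalk A x
  let e := (asIso (Scheme.Hom.stalkMap f x)).commRingCatIsoToRingEquiv
  exact ⟨e.trans (IsLocalization.algEquiv y.asIdeal.primeCompl
    ((Spec A).presheaf.stalk x) (Localization.AtPrime y.asIdeal)).toRingEquiv⟩

theorem isRegularLocal_of_ringEquiv {O O' : Type u} [CommRing O] [IsLocalRing O] [CommRing O']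
    [IsLocalRing O'] (e : O ≃+* O') (h : IsRegularLocal O) : IsRegularLocal O' := by
  classical
  obtain ⟨s, hspan, hcard⟩ := h
  refine ⟨s.image e, ?_, ?_⟩
  · rw [Finset.coe_image, ← RingEquiv.coe_toRingHom, ← Ideal.map_span, hspan]
    exact IsLocalRing.map_ringEquiv_maximalIdeal e
  · rw [Finset.card_image_of_injective s e.injective, hcard, ringKrullDim_eq_of_ringEquiv e]

theorem hasGlobalDimensionLE_iff_of_isRegularLocal {A : Type u} [CommRing A] [IsLocalRing A]
    [IsNoetherianRing A] (h : IsRegularLocal A) {n : ℕ} :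
    HasGlobalDimensionLE (ModuleCat.{u} A) n ↔ ringKrullDim A ≤ n := by
  obtain ⟨s, hspan, hcard⟩ := h
  refine hasGlobalDimensionLE_iff_ringKrullDim_le (rs := s.toList) ?_ (by simpa using hcard)
  simpa [Ideal.ofList] using hspan

theorem hasGlobalDimensionLE_iff_forall_ringKrullDim_stalk_le {X : Scheme.{u}}
    {A : CommRingCat.{u}} [IsNoetherianRing A] (f : Spec A ⟶ X) [IsOpenImmersion f]
    (hreg : ∀ x : X, IsRegularLocal (X.presheaf.stalk x)) {n : ℕ} :
    HasGlobalDimensionLE (ModuleCat.{u} A) n ↔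
      ∀ y : Spec A, ringKrullDim (X.presheaf.stalk (f y)) ≤ n := by
  have hlocal (y : PrimeSpectrum A) :
      HasGlobalDimensionLE (ModuleCat.{u} (Localization.AtPrime y.asIdeal)) n ↔
        ringKrullDim (X.presheaf.stalk (f y)) ≤ n := by
    obtain ⟨e⟩ := nonempty_stalk_ringEquiv_localization f y
    rw [ringKrullDim_eq_of_ringEquiv e]
    exact hasGlobalDimensionLE_iff_of_isRegularLocal (isRegularLocal_of_ringEquiv e (hreg _))
  rw [hasGlobalDimensionLE_iff_forall_isPrime]
  exact ⟨fun h (y : PrimeSpectrum A) ↦ (hlocal y).1 (h y.asIdeal),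
    fun h p hp ↦ (hlocal ⟨p, hp⟩).2 (h _)⟩

theorem exists_finite_affineOpenCover (X : Scheme.{u}) [CompactSpace X] :
    ∃ 𝒰 : Scheme.AffineOpenCover.{u} X, Finite 𝒰.I₀ := by
  let 𝒱 := X.affineCover.finiteSubcover
  let 𝒰 : X.AffineOpenCover :=
    { I₀ := 𝒱.I₀
      X := _
      f := 𝒱.f
      idx x := (𝒱.exists_eq x).choose
      covers x := (𝒱.exists_eq x).choose_spec
      map_prop := 𝒱.map_prop }
  exact ⟨𝒰, inferInstanceAs (Finite 𝒱.I₀)⟩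

theorem isNoetherianRing_affineOpenCover_X {X : Scheme.{u}} [IsLocallyNoetherian X]
    (𝒰 : X.AffineOpenCover) (i : 𝒰.I₀) : IsNoetherianRing (𝒰.X i) :=
  have := isLocallyNoetherian_of_isOpenImmersion (𝒰.f i)
  isLocallyNoetherian_Spec.1 this

end Schemes

end QcohGlobalDimension

open QcohGlobalDimension in
theorem stmt_17_general (X : Scheme.{u}) [IsNoetherian X]
    (hreg : ∀ x : X, IsRegularLocal (X.presheaf.stalk x))
    {𝒬 : Type u₁} [Category.{v₁} 𝒬] [Abelian 𝒬] [HasExt.{w} 𝒬]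
    (ι : 𝒬 ⥤ X.Modules) [ι.Full] [ι.Faithful] [PreservesFiniteLimits ι]
    (hima : ∀ Q : 𝒬, (ι.obj Q).IsQuasicoherent)
    (himb : ∀ M : X.Modules, M.IsQuasicoherent → ∃ Q : 𝒬, Nonempty (ι.obj Q ≅ M)) (n : ℕ) :
    (∀ M N : 𝒬, Subsingleton (Ext M N (n + 1))) ↔ topologicalKrullDim X ≤ n := by
  obtain ⟨𝒰, _⟩ := exists_finite_affineOpenCover X
  have := isNoetherianRing_affineOpenCover_X 𝒰
  have hpush (i N) : ι.essImage ((tilde.functor (𝒰.X i) ⋙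
      Scheme.Modules.pushforward (𝒰.f i)).obj N) :=
    himb _ (isQuasicoherent_pushforward_tilde (𝒰.f i) (isQuasicoherent_kernel ι hima himb) N)
  have hglue := isInjectiveGluing_localSectionsAdjunction 𝒰 hima hpush
  have := fun i ↦ preservesFiniteLimits_localSections (ι := ι) (f := 𝒰.f i)
  have := hglue.enoughInjectives
  calc (∀ M N : 𝒬, Subsingleton (Ext M N (n + 1)))
    _ ↔ HasGlobalDimensionLE 𝒬 n := forall_subsingleton_ext_iff_hasGlobalDimensionLE
    _ ↔ ∀ i, HasGlobalDimensionLE (ModuleCat.{u} (𝒰.X i)) n := hglue.hasGlobalDimensionLE_iff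
    _ ↔ ∀ i (y : Spec (𝒰.X i)), ringKrullDim (X.presheaf.stalk (𝒰.f i y)) ≤ n :=
      forall_congr' fun i ↦ hasGlobalDimensionLE_iff_forall_ringKrullDim_stalk_le (𝒰.f i) hreg
    _ ↔ ∀ x : X, ringKrullDim (X.presheaf.stalk x) ≤ n :=
      ⟨fun h x ↦ 𝒰.covers x |>.choose_spec ▸ h (𝒰.idx x) _, fun h i y ↦ h _⟩
    _ ↔ topologicalKrullDim X ≤ n :=
      (topologicalKrullDim_le_iff_forall_ringKrullDim_stalk_le X).symm

/-- Let `X` be a regular noetherian scheme of Krull dimension `d`.  Then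
the abelian category `Qcoh(X)` of quasi-coherent sheaves on `X` has global dimension
equal to `d`: `Ext^{n+1}` vanishes identically on `Qcoh(X)` if and only if `d ≤ n`.
Here `Qcoh(X)` is formalized as any abelian category `𝒬` equipped with a fully faithful
exact functor `ι` to the category `X.Modules` of sheaves of modules on `X` whose
essential image consists exactly of the quasi-coherent sheaves. -/
theorem stmt_17 (X : Scheme.{u}) [IsNoetherian X]
    (hreg : ∀ x : X, IsRegularLocal (X.presheaf.stalk x))
    (d : ℕ) (hdim : topologicalKrullDim X = (d : WithBot ℕ∞))
    {𝒬 : Type u₁} [Category.{v₁} 𝒬] [Abelian 𝒬] [HasExt.{w} 𝒬]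
    (ι : 𝒬 ⥤ X.Modules) [ι.Full] [ι.Faithful] [ι.Additive]
    [PreservesFiniteLimits ι] [PreservesFiniteColimits ι]
    (hima : ∀ Q : 𝒬, (ι.obj Q).IsQuasicoherent)
    (himb : ∀ M : X.Modules, M.IsQuasicoherent → ∃ Q : 𝒬, Nonempty (ι.obj Q ≅ M)) :
    ∀ n : ℕ, (∀ M N : 𝒬, Subsingleton (Ext M N (n + 1))) ↔ d ≤ n := by
  intro n
  rw [stmt_17_general X hreg ι hima himb n, hdim, Nat.cast_le]
end
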